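/- arXiv:1604.04357 — 18 statements merged into one kernel-verified Lean document; each statement's English description precedes it below -/
import Mathlib

section
/- For every valid index triple (i,j,k), one has D_{i,j,k} ≤ D_{i+1,j,k} whenever both sides are defined; in particular, every D_{i,j,k} is a non-negative integer. -/
/-!
Write `S i j k = ∑ t ≤ j, D i t k` and `C i j = S i j (k+1) - S i j k`. Substituting the recursion
for `D i j (k+1)` gives, for `i ≥ 2` and `j ≥ 1`,

  `C i j = min (C i (j-1) - D i j k + D (i-1) (j+1) k) (C (i-1) j)`,

so `C` is weakly decreasing in `i` (`hC` below). The recursion for `D (i+1) j (k+1)` now reads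
`min (D i (j+1) k) (D (i+1) j k + C i j - C (i+1) (j-1))`. Both entries are at least
`D i j (k+1)`, by induction on `k`:
* `D i j (k+1) ≤ D (i-1) (j+1) k ≤ D i (j+1) k` (for `i = 1` the left side is zero);
* `D i j (k+1) = D i j k + C i j - C i (j-1) ≤ D (i+1) j k + C i j - C (i+1) (j-1)`.

Non-negativity at level `k+1` follows from monotonicity, since `D 1 j (k+1) = 0`.
-/

/-- Lemma 2: `D i j k ≤ D (i+1) j k` whenever both sides are defined;
in particular every `D i j k` is a non-negative integer. -/
theorem stmt_1 (n : ℕ) (hn : 1 ≤ n)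
    (x : ℕ → ℕ → ℤ)
    (hx0 : ∀ i j : ℕ, 1 ≤ i → 1 ≤ j → i + j ≤ n + 1 → 0 ≤ x i j)
    (hxmono : ∀ i j : ℕ, 1 ≤ i → 1 ≤ j → i + 1 + j ≤ n + 1 → x i j ≤ x (i + 1) j)
    (D : ℕ → ℕ → ℕ → ℤ)
    (hD0 : ∀ i j : ℕ, 1 ≤ i → 1 ≤ j → i + j ≤ n + 1 → D i j 0 = x i j)
    (hD1 : ∀ j k : ℕ, 1 ≤ j → 1 ≤ k → 1 + j + k ≤ n + 2 → D 1 j k = 0)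
    (hDrec : ∀ i j k : ℕ, 2 ≤ i → 1 ≤ j → 1 ≤ k → i + j + k ≤ n + 2 →
      D i j k = min (D (i - 1) (j + 1) (k - 1))
        (∑ t ∈ Finset.Icc 1 j, D i t (k - 1)
          - ∑ t ∈ Finset.Icc 1 (j - 1), D i t k
          - ∑ t ∈ Finset.Icc 1 j, D (i - 1) t (k - 1)
          + ∑ t ∈ Finset.Icc 1 j, D (i - 1) t k)) :
    (∀ i j k : ℕ, 1 ≤ i → 1 ≤ j → i + 1 + j ≤ n + 1 → i + 1 + j + k ≤ n + 2 →
      D i j k ≤ D (i + 1) j k) ∧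
    (∀ i j k : ℕ, 1 ≤ i → 1 ≤ j → i + j ≤ n + 1 → i + j + k ≤ n + 2 →
      0 ≤ D i j k) := by
  have hC : ∀ i j k : ℕ, 1 ≤ i → i + 1 + j + (k + 1) ≤ n + 2 →
      ∑ t ∈ Finset.Icc 1 j, D (i + 1) t (k + 1) - ∑ t ∈ Finset.Icc 1 j, D (i + 1) t k ≤
      ∑ t ∈ Finset.Icc 1 j, D i t (k + 1) - ∑ t ∈ Finset.Icc 1 j, D i t k := by
    intro i j k hi h
    rcases j with _ | j
    · simp
    · have h1 := hDrec (i + 1) (j + 1) (k + 1) (by omega) (by omega) (by omega) h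
      simp only [Nat.add_sub_cancel] at h1
      have h2 := h1.le.trans (min_le_right _ _)
      rw [Finset.sum_Icc_succ_top (by omega) (fun t => D (i + 1) t (k + 1))]
      linarith
  -- Both conjuncts are proved together: the step for `i = 1` uses non-negativity at level `k`.
  have key : ∀ k : ℕ,
      (∀ i j : ℕ, 1 ≤ i → 1 ≤ j → i + 1 + j ≤ n + 1 → i + 1 + j + k ≤ n + 2 →
        D i j k ≤ D (i + 1) j k) ∧
      (∀ i j : ℕ, 1 ≤ i → 1 ≤ j → i + j ≤ n + 1 → i + j + k ≤ n + 2 → 0 ≤ D i j k) := by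
    intro k
    induction k with
    | zero =>
      refine ⟨fun i j hi hj h _ => ?_, fun i j hi hj h _ => ?_⟩
      · rw [hD0 i j hi hj (by omega), hD0 (i + 1) j (by omega) hj h]
        exact hxmono i j hi hj h
      · rw [hD0 i j hi hj h]
        exact hx0 i j hi hj h
    | succ k ih =>
      obtain ⟨ihmono, ihnn⟩ := ih
      have mono : ∀ i j : ℕ, 1 ≤ i → 1 ≤ j → i + 1 + j ≤ n + 1 →
          i + 1 + j + (k + 1) ≤ n + 2 → D i j (k + 1) ≤ D (i + 1) j (k + 1) := by
        intro i j hi hj _ h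
        obtain ⟨j, rfl⟩ : ∃ m, j = m + 1 := ⟨j - 1, by omega⟩
        rw [hDrec (i + 1) (j + 1) (k + 1) (by omega) (by omega) (by omega) h]
        simp only [Nat.add_sub_cancel]
        refine le_min ?_ ?_
        · obtain rfl | ⟨i, hi', rfl⟩ : i = 1 ∨ ∃ m, 1 ≤ m ∧ i = m + 1 := by
            rcases Nat.eq_or_lt_of_le hi with h' | h'
            · exact Or.inl h'.symm
            · exact Or.inr ⟨i - 1, by omega, by omega⟩
          · rw [hD1 (j + 1) (k + 1) (by omega) (by omega) (by omega)]
            exact ihnn 1 (j + 1 + 1) le_rfl (by omega) (by omega) (by omega)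
          · have h1 := hDrec (i + 1) (j + 1) (k + 1) (by omega) (by omega) (by omega) (by omega)
            simp only [Nat.add_sub_cancel] at h1
            exact (h1.le.trans (min_le_left _ _)).trans
              (ihmono i (j + 1 + 1) hi' (by omega) (by omega) (by omega))
        · have h1 := hC i j k hi (by omega)
          have h2 := ihmono i (j + 1) hi (by omega) (by omega) (by omega)
          simp only [Finset.sum_Icc_succ_top (show 1 ≤ j + 1 by omega)]
          linarith
      refine ⟨mono, fun i j hi => ?_⟩
      induction i, hi using Nat.le_induction with
      | base =>
        intro hj _ h
        exact (hD1 j (k + 1) hj (by omega) h).ge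
      | succ i hi ih =>
        intro hj h h'
        exact (ih hj (by omega) (by omega)).trans (mono i j hi hj h h')
  exact ⟨fun i j k => (key k).1 i j, fun i j k => (key k).2 i j⟩
end

section
/- For every valid index triple (i,j,k) with k ≥ 1 (so that both sides are defined), one has D_{i,j,k} ≤ D_{i,j+1,k-1}. -/
/-!
The inequality follows from monotonicity of `D` in its first index, `D i j k ≤ D (i+1) j k`.
Given monotonicity at level `k`, the first entry of the minimum defining `D i j (k+1)` yields
`D i j (k+1) ≤ D (i-1) (j+1) k ≤ D i (j+1) k`.

Monotonicity is proved by induction on `k`, the case `k = 0` being the hypothesis on `x`. At level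
`k+1`, the quantity `D i j (k+1)` has to be bounded by both entries of the minimum defining
`D (i+1) j (k+1)`. The first bound is the inequality just derived from level `k`. For the second,
the recursion for `D (i+1) (j-1) (k+1)` bounds the partial sum `∑_{t<j} D (i+1) t (k+1)`; what is
left is `D i j k ≤ D (i+1) j k`.
-/

/-- Lemma 3: `D i j k ≤ D i (j+1) (k-1)` for every valid triple with `k ≥ 1`
such that both sides are defined. -/
theorem stmt_2 (n : ℕ) (hn : 1 ≤ n)
    (x : ℕ → ℕ → ℤ)
    (hx0 : ∀ i j : ℕ, 1 ≤ i → 1 ≤ j → i + j ≤ n + 1 → 0 ≤ x i j)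
    (hxmono : ∀ i j : ℕ, 1 ≤ i → 1 ≤ j → i + 1 + j ≤ n + 1 → x i j ≤ x (i + 1) j)
    (D : ℕ → ℕ → ℕ → ℤ)
    (hD0 : ∀ i j : ℕ, 1 ≤ i → 1 ≤ j → i + j ≤ n + 1 → D i j 0 = x i j)
    (hD1 : ∀ j k : ℕ, 1 ≤ j → 1 ≤ k → 1 + j + k ≤ n + 2 → D 1 j k = 0)
    (hDrec : ∀ i j k : ℕ, 2 ≤ i → 1 ≤ j → 1 ≤ k → i + j + k ≤ n + 2 →
      D i j k = min (D (i - 1) (j + 1) (k - 1))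
        (∑ t ∈ Finset.Icc 1 j, D i t (k - 1)
          - ∑ t ∈ Finset.Icc 1 (j - 1), D i t k
          - ∑ t ∈ Finset.Icc 1 j, D (i - 1) t (k - 1)
          + ∑ t ∈ Finset.Icc 1 j, D (i - 1) t k)) :
    ∀ i j k : ℕ, 1 ≤ i → 1 ≤ j → 1 ≤ k → i + (j + 1) ≤ n + 1 → i + j + k ≤ n + 2 →
      D i j k ≤ D i (j + 1) (k - 1) := by
  have diag : ∀ k : ℕ,
      (∀ i j : ℕ, 1 ≤ i → 1 ≤ j → i + 1 + j ≤ n + 1 → i + 1 + j + k ≤ n + 2 →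
        D i j k ≤ D (i + 1) j k) →
      ∀ i j : ℕ, 1 ≤ i → 1 ≤ j → i + (j + 1) ≤ n + 1 → i + j + (k + 1) ≤ n + 2 →
        D i j (k + 1) ≤ D i (j + 1) k := by
    intro k hmono i j hi hj h1 h2
    obtain rfl | ⟨i, rfl⟩ : i = 1 ∨ ∃ i', i = i' + 2 := by
      rcases Nat.lt_or_ge i 2 with h | h
      · left; omega
      · right; exact ⟨i - 2, by omega⟩
    · rw [hD1 j (k + 1) hj (by omega) (by omega)]
      rcases Nat.eq_zero_or_pos k with rfl | hk
      · rw [hD0 1 (j + 1) le_rfl (by omega) h1]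
        exact hx0 1 (j + 1) le_rfl (by omega) h1
      · exact (hD1 (j + 1) k (by omega) hk (by omega)).ge
    · rw [hDrec (i + 2) j (k + 1) (by omega) hj (by omega) h2]
      exact (min_le_left _ _).trans
        (hmono (i + 1) (j + 1) (by omega) (by omega) (by omega) (by omega))
  have mono : ∀ k i j : ℕ, 1 ≤ i → 1 ≤ j → i + 1 + j ≤ n + 1 → i + 1 + j + k ≤ n + 2 →
      D i j k ≤ D (i + 1) j k := by
    intro k
    induction k with
    | zero =>
      intro i j hi hj h1 _
      rw [hD0 i j hi hj (by omega), hD0 (i + 1) j (by omega) hj h1]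
      exact hxmono i j hi hj h1
    | succ k ih =>
      intro i j hi hj h1 h2
      rw [hDrec (i + 1) j (k + 1) (by omega) hj (by omega) h2]
      refine le_min (diag k ih i j hi hj (by omega) (by omega)) ?_
      have hstep := ih i j hi hj h1 (by omega)
      obtain ⟨j, rfl⟩ : ∃ j', j = j' + 1 := ⟨j - 1, by omega⟩
      simp only [Nat.add_sub_cancel, Finset.sum_Icc_succ_top (Nat.le_add_left 1 j)]
      rcases Nat.eq_zero_or_pos j with rfl | hj0
      · simp only [zero_add] at hstep
        simp
        linarith
      · obtain ⟨j, rfl⟩ : ∃ j', j = j' + 1 := ⟨j - 1, by omega⟩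
        -- The second entry of the minimum at `j - 1` bounds the sum over `t < j`.
        have hprev := (hDrec (i + 1) (j + 1) (k + 1) (by omega) hj0 (by omega) (by omega)).le.trans
          (min_le_right _ _)
        simp only [Nat.add_sub_cancel, Finset.sum_Icc_succ_top (Nat.le_add_left 1 j)] at hprev ⊢
        linarith
  intro i j k hi hj hk h1 h2
  obtain ⟨k, rfl⟩ : ∃ k', k = k' + 1 := ⟨k - 1, by omega⟩
  exact diag k (mono k) i j hi hj h1 h2
end

section
/- For every valid index triple (i,j,k) with i ≤ k, one has D_{i,j,k} = 0. -/
/-!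
By induction on `k`, the family `D` is non-negative and weakly increasing in `i`.  For the step,
let `A i j k` be the second argument of the minimum defining `D i j k`.  The bound
`D i (j-1) k ≤ A i (j-1) k` says that `∑_{t<j} D i t k` is at most
`∑_{t<j} (D i t (k-1) - D (i-1) t (k-1) + D (i-1) t k)`, whence
`A i j k ≥ D i j (k-1) - D (i-1) j (k-1) + D (i-1) j k ≥ D (i-1) j k`
by monotonicity at level `k-1`.  The first argument satisfies
`D (i-1) (j+1) (k-1) ≥ D (i-2) (j+1) (k-1) ≥ D (i-1) j k`, again by monotonicity at level `k-1`
and the recursion (for `i = 2` it is `≥ 0 = D 1 j k`).  So `D i j k ≥ D (i-1) j k`, and `D 1 j k = 0` gives non-negativity.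

Vanishing follows by induction on `i`: for `1 < i ≤ k`,
`0 ≤ D i j k ≤ D (i-1) (j+1) (k-1) = 0`.
-/

/-- Lemma 4: `D i j k = 0` for every valid triple with `i ≤ k`. -/
theorem stmt_3 (n : ℕ) (hn : 1 ≤ n)
    (x : ℕ → ℕ → ℤ)
    (hx0 : ∀ i j : ℕ, 1 ≤ i → 1 ≤ j → i + j ≤ n + 1 → 0 ≤ x i j)
    (hxmono : ∀ i j : ℕ, 1 ≤ i → 1 ≤ j → i + 1 + j ≤ n + 1 → x i j ≤ x (i + 1) j)
    (D : ℕ → ℕ → ℕ → ℤ)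
    (hD0 : ∀ i j : ℕ, 1 ≤ i → 1 ≤ j → i + j ≤ n + 1 → D i j 0 = x i j)
    (hD1 : ∀ j k : ℕ, 1 ≤ j → 1 ≤ k → 1 + j + k ≤ n + 2 → D 1 j k = 0)
    (hDrec : ∀ i j k : ℕ, 2 ≤ i → 1 ≤ j → 1 ≤ k → i + j + k ≤ n + 2 →
      D i j k = min (D (i - 1) (j + 1) (k - 1))
        (∑ t ∈ Finset.Icc 1 j, D i t (k - 1)
          - ∑ t ∈ Finset.Icc 1 (j - 1), D i t k
          - ∑ t ∈ Finset.Icc 1 j, D (i - 1) t (k - 1)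
          + ∑ t ∈ Finset.Icc 1 j, D (i - 1) t k)) :
    ∀ i j k : ℕ, 1 ≤ i → 1 ≤ j → i ≤ k → i + j ≤ n + 1 → i + j + k ≤ n + 2 →
      D i j k = 0 := by
  -- The recursion with `i + 1`, `k + 1` in place of `i`, `k`, avoiding `i - 1` and `k - 1`.
  have step : ∀ i j k : ℕ, 1 ≤ i → 1 ≤ j → i + j + k ≤ n →
      D (i + 1) j (k + 1) = min (D i (j + 1) k)
        (∑ t ∈ Finset.Icc 1 j, D (i + 1) t k
          - ∑ t ∈ Finset.Icc 1 (j - 1), D (i + 1) t (k + 1)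
          - ∑ t ∈ Finset.Icc 1 j, D i t k
          + ∑ t ∈ Finset.Icc 1 j, D i t (k + 1)) := by
    intro i j k hi hj h
    simpa using hDrec (i + 1) j (k + 1) (by omega) hj (by omega) (by omega)
  have le_first : ∀ i j k : ℕ, 1 ≤ i → 1 ≤ j → i + j + k ≤ n →
      D (i + 1) j (k + 1) ≤ D i (j + 1) k := by
    intro i j k hi hj h
    rw [step i j k hi hj h]
    exact min_le_left _ _
  have partial_sum_le : ∀ i j k : ℕ, 1 ≤ i → i + j + k ≤ n →
      ∑ t ∈ Finset.Icc 1 j, D (i + 1) t (k + 1) ≤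
        ∑ t ∈ Finset.Icc 1 j, D (i + 1) t k - ∑ t ∈ Finset.Icc 1 j, D i t k
          + ∑ t ∈ Finset.Icc 1 j, D i t (k + 1) := by
    intro i j k hi h
    rcases j with _ | j
    · simp
    · have h1 := step i (j + 1) k hi (by omega) h
      have h2 := h1.trans_le (min_le_right _ _)
      rw [Nat.add_sub_cancel] at h2
      rw [Finset.sum_Icc_succ_top (by omega) (fun t => D (i + 1) t (k + 1))]
      linarith
  have key : ∀ k : ℕ,
      (∀ i j : ℕ, 1 ≤ i → 1 ≤ j → i + j ≤ n + 1 → i + j + k ≤ n + 2 → 0 ≤ D i j k) ∧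
      (∀ i j : ℕ, 1 ≤ i → 1 ≤ j → i + 1 + j ≤ n + 1 → i + 1 + j + k ≤ n + 2 →
        D i j k ≤ D (i + 1) j k) := by
    intro k
    induction k with
    | zero =>
      refine ⟨fun i j hi hj h _ => ?_, fun i j hi hj h _ => ?_⟩
      · rw [hD0 i j hi hj h]
        exact hx0 i j hi hj h
      · rw [hD0 i j hi hj (by omega), hD0 (i + 1) j (by omega) hj h]
        exact hxmono i j hi hj h
    | succ k ih =>
      obtain ⟨ih0, ihm⟩ := ih
      have mono : ∀ i j : ℕ, 1 ≤ i → 1 ≤ j → i + 1 + j ≤ n + 1 → i + 1 + j + (k + 1) ≤ n + 2 →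
          D i j (k + 1) ≤ D (i + 1) j (k + 1) := by
        intro i j hi hj _ h
        rw [step i j k hi hj (by omega)]
        refine le_min ?_ ?_
        · rcases Nat.lt_or_ge 1 i with hi2 | hi2
          · obtain ⟨m, rfl⟩ : ∃ m, i = m + 1 := ⟨i - 1, by omega⟩
            exact (le_first m j k (by omega) hj (by omega)).trans
              (ihm m (j + 1) (by omega) (by omega) (by omega) (by omega))
          · obtain rfl : i = 1 := by omega
            rw [hD1 j (k + 1) hj (by omega) (by omega)]
            exact ih0 1 (j + 1) le_rfl (by omega) (by omega) (by omega)
        · obtain ⟨m, rfl⟩ : ∃ m, j = m + 1 := ⟨j - 1, by omega⟩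
          have hp := partial_sum_le i m k hi (by omega)
          have hm := ihm i (m + 1) hi hj (by omega) (by omega)
          rw [Nat.add_sub_cancel, Finset.sum_Icc_succ_top (by omega) (fun t => D (i + 1) t k),
            Finset.sum_Icc_succ_top (by omega) (fun t => D i t k),
            Finset.sum_Icc_succ_top (by omega) (fun t => D i t (k + 1))]
          linarith
      refine ⟨fun i j hi => ?_, mono⟩
      induction i, hi using Nat.le_induction with
      | base =>
        intro hj _ h
        rw [hD1 j (k + 1) hj (by omega) h]
      | succ i hi ihi =>
        intro hj h1 h
        exact (ihi hj (by omega) (by omega)).trans (mono i j hi hj h1 h)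
  intro i j k hi
  induction i, hi using Nat.le_induction generalizing j k with
  | base =>
    intro hj hk _ h
    exact hD1 j k hj hk h
  | succ i hi ih =>
    intro hj hk h1 h
    obtain ⟨m, rfl⟩ : ∃ m, k = m + 1 := ⟨k - 1, by omega⟩
    refine le_antisymm ?_ ((key (m + 1)).1 (i + 1) j (by omega) hj h1 h)
    rw [← ih (j + 1) m (by omega) (by omega) (by omega) (by omega)]
    exact le_first i j m hi hj (by omega)
end

section
/- For every valid index triple (i,j,k) with k ≥ 1 such that both sides are defined, one has L_{i,j,k} ≤ L_{i,j+1,k}; in particular, every L_{i,j,k} is a non-negative integer. -/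
/-!
For `j ≥ 1` the difference `L i (j+1) k - L i j k` equals `D i (j+1) (k-1) - D i j k`, so the claim
amounts to `D i j k ≤ D i (j+1) (k-1)`. The recursion gives `D i j k ≤ D (i-1) (j+1) (k-1)`, hence
it is enough that `D` is non-negative and weakly increasing in `i` at every level `k`.

This is proved by induction on `k`. Assume it at level `k`. The recursion at level `k + 1` reads
`D i j (k+1) = min (D (i-1) (j+1) k) (L i j (k+1) - L (i-1) j (k+1) + D (i-1) j (k+1))`.
Its second argument shows `L (i-1) j (k+1) - D (i-1) j (k+1) ≤ L i j (k+1) - D i j (k+1)`; adding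
the inequality `D (i-1) (j+1) k ≤ D i (j+1) k` yields `L (i-1) (j+1) (k+1) ≤ L i (j+1) (k+1)`; as
`L i 1 (k+1) = D i 1 k`, `L` is weakly increasing in `i` for every `j ≥ 1`. Then both arguments of
the minimum are at least `D (i-1) j (k+1)`, the first one
because `D (i-1) j (k+1) ≤ D (i-1) (j+1) k` follows from level `k` as above.
-/

/-- Lemma 5: `L i j k ≤ L i (j+1) k` whenever both sides are defined;
in particular every `L i j k` is a non-negative integer. -/
theorem stmt_4 (n : ℕ) (hn : 1 ≤ n)
    (x : ℕ → ℕ → ℤ)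
    (hx0 : ∀ i j : ℕ, 1 ≤ i → 1 ≤ j → i + j ≤ n + 1 → 0 ≤ x i j)
    (hxmono : ∀ i j : ℕ, 1 ≤ i → 1 ≤ j → i + 1 + j ≤ n + 1 → x i j ≤ x (i + 1) j)
    (D : ℕ → ℕ → ℕ → ℤ)
    (hD0 : ∀ i j : ℕ, 1 ≤ i → 1 ≤ j → i + j ≤ n + 1 → D i j 0 = x i j)
    (hD1 : ∀ j k : ℕ, 1 ≤ j → 1 ≤ k → 1 + j + k ≤ n + 2 → D 1 j k = 0)
    (hDrec : ∀ i j k : ℕ, 2 ≤ i → 1 ≤ j → 1 ≤ k → i + j + k ≤ n + 2 →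
      D i j k = min (D (i - 1) (j + 1) (k - 1))
        (∑ t ∈ Finset.Icc 1 j, D i t (k - 1)
          - ∑ t ∈ Finset.Icc 1 (j - 1), D i t k
          - ∑ t ∈ Finset.Icc 1 j, D (i - 1) t (k - 1)
          + ∑ t ∈ Finset.Icc 1 j, D (i - 1) t k))
    (L : ℕ → ℕ → ℕ → ℤ)
    (hL : ∀ i j k : ℕ, 1 ≤ i → 1 ≤ k → i + j + k ≤ n + 2 →
      L i j k = ∑ t ∈ Finset.Icc 1 j, D i t (k - 1)
        - ∑ t ∈ Finset.Icc 1 (j - 1), D i t k) :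
    (∀ i j k : ℕ, 1 ≤ i → 1 ≤ k → i + (j + 1) + k ≤ n + 2 →
      L i j k ≤ L i (j + 1) k) ∧
    (∀ i j k : ℕ, 1 ≤ i → 1 ≤ k → i + j + k ≤ n + 2 →
      0 ≤ L i j k) := by
  -- The recursion written in terms of `L`, with indices shifted to avoid truncated subtraction.
  have hrec : ∀ i j k : ℕ, 1 ≤ i → i + j + k + 3 ≤ n + 2 →
      D (i + 1) (j + 1) (k + 1) = min (D i (j + 2) k)
        (L (i + 1) (j + 1) (k + 1) - L i (j + 1) (k + 1) + D i (j + 1) (k + 1)) := by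
    intro i j k hi h
    rw [hDrec (i + 1) (j + 1) (k + 1) (by omega) (by omega) (by omega) (by omega),
      hL (i + 1) (j + 1) (k + 1) (by omega) (by omega) (by omega),
      hL i (j + 1) (k + 1) (by omega) (by omega) (by omega)]
    simp only [Nat.add_sub_cancel]
    rw [Finset.sum_Icc_succ_top (by omega) (fun t => D i t (k + 1))]
    congr 1
    ring
  have hLone : ∀ i k : ℕ, 1 ≤ i → i + k + 2 ≤ n + 2 → L i 1 (k + 1) = D i 1 k := by
    intro i k hi h
    rw [hL i 1 (k + 1) hi (by omega) (by omega)]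
    simp
  have hLsucc : ∀ i j k : ℕ, 1 ≤ i → i + j + k + 3 ≤ n + 2 →
      L i (j + 2) (k + 1) = L i (j + 1) (k + 1) + (D i (j + 2) k - D i (j + 1) (k + 1)) := by
    intro i j k hi h
    rw [hL i (j + 2) (k + 1) hi (by omega) (by omega),
      hL i (j + 1) (k + 1) hi (by omega) (by omega)]
    simp only [Nat.add_sub_cancel, show j + 2 - 1 = j + 1 by omega]
    rw [Finset.sum_Icc_succ_top (by omega) (fun t => D i t (k + 1)),
      Finset.sum_Icc_succ_top (by omega : 1 ≤ j + 1 + 1) (fun t => D i t k)]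
    ring
  -- The inequality equivalent to the claim, deduced at level `k + 1` from level `k`.
  have hshift : ∀ k : ℕ,
      (∀ i j, 1 ≤ i → i + j + 1 + k ≤ n + 2 → i + j + 1 ≤ n + 1 → 0 ≤ D i (j + 1) k) →
      (∀ i j, 1 ≤ i → i + j + 2 + k ≤ n + 2 → i + j + 2 ≤ n + 1 →
        D i (j + 1) k ≤ D (i + 1) (j + 1) k) →
      ∀ i j, 1 ≤ i → i + j + k + 2 ≤ n + 1 → D i (j + 1) (k + 1) ≤ D i (j + 2) k := by
    intro k hnn hmono i j hi h
    obtain rfl | ⟨i, rfl⟩ : i = 1 ∨ ∃ m, i = m + 2 := by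
      rcases Nat.lt_or_ge i 2 with h2 | h2
      · left; omega
      · right; exact ⟨i - 2, by omega⟩
    · rw [hD1 (j + 1) (k + 1) (by omega) (by omega) (by omega)]
      exact hnn 1 (j + 1) le_rfl (by omega) (by omega)
    · rw [hrec (i + 1) j k (by omega) (by omega)]
      exact (min_le_left _ _).trans (hmono (i + 1) (j + 1) (by omega) (by omega) (by omega))
  have key : ∀ k : ℕ,
      (∀ i j, 1 ≤ i → i + j + 1 + k ≤ n + 2 → i + j + 1 ≤ n + 1 → 0 ≤ D i (j + 1) k) ∧
      (∀ i j, 1 ≤ i → i + j + 2 + k ≤ n + 2 → i + j + 2 ≤ n + 1 →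
        D i (j + 1) k ≤ D (i + 1) (j + 1) k) := by
    intro k
    induction k with
    | zero =>
      refine ⟨fun i j hi _ h => ?_, fun i j hi _ h => ?_⟩
      · rw [hD0 i (j + 1) hi (by omega) (by omega)]
        exact hx0 i (j + 1) hi (by omega) (by omega)
      · rw [hD0 i (j + 1) hi (by omega) (by omega),
          hD0 (i + 1) (j + 1) (by omega) (by omega) (by omega)]
        exact hxmono i (j + 1) hi (by omega) (by omega)
    | succ k ih =>
      obtain ⟨hnn, hmono⟩ := ih
      have hLmono : ∀ j i, 1 ≤ i → i + j + k + 3 ≤ n + 2 →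
          L i (j + 1) (k + 1) ≤ L (i + 1) (j + 1) (k + 1) := by
        intro j
        cases j with
        | zero =>
          intro i hi h
          have := hmono i 0 hi (by omega) (by omega)
          rw [hLone i k hi (by omega), hLone (i + 1) k (by omega) (by omega)]
          exact this
        | succ j =>
          intro i hi h
          have h1 := hmono i (j + 1) hi (by omega) (by omega)
          have h2 := hrec i j k hi (by omega)
          have h3 := min_le_right (D i (j + 2) k)
            (L (i + 1) (j + 1) (k + 1) - L i (j + 1) (k + 1) + D i (j + 1) (k + 1))
          have h4 := hLsucc i j k hi (by omega)
          have h5 := hLsucc (i + 1) j k (by omega) (by omega)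
          simp only [show j + 1 + 1 = j + 2 by omega] at h1 ⊢
          linarith
      have hmono' : ∀ i j, 1 ≤ i → i + j + 2 + (k + 1) ≤ n + 2 → i + j + 2 ≤ n + 1 →
          D i (j + 1) (k + 1) ≤ D (i + 1) (j + 1) (k + 1) := by
        intro i j hi h _
        rw [hrec i j k hi (by omega)]
        refine le_min (hshift k hnn hmono i j hi (by omega)) ?_
        linarith [hLmono j i hi (by omega)]
      refine ⟨?_, hmono'⟩
      intro i j hi
      induction i, hi using Nat.le_induction with
      | base =>
        intro h _
        rw [hD1 (j + 1) (k + 1) (by omega) (by omega) (by omega)]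
      | succ i hi ihi =>
        intro h _
        exact (ihi (by omega) (by omega)).trans (hmono' i j hi (by omega) (by omega))
  have hLzero : ∀ i k : ℕ, 1 ≤ i → 1 ≤ k → i + k ≤ n + 2 → L i 0 k = 0 := by
    intro i k hi hk h
    rw [hL i 0 k hi hk (by omega)]
    simp
  have hstep : ∀ i j k : ℕ, 1 ≤ i → 1 ≤ k → i + (j + 1) + k ≤ n + 2 →
      L i j k ≤ L i (j + 1) k := by
    intro i j k hi hk h
    obtain ⟨k, rfl⟩ : ∃ m, k = m + 1 := ⟨k - 1, by omega⟩
    cases j with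
    | zero =>
      rw [hLzero i (k + 1) hi hk (by omega), hLone i k hi (by omega)]
      exact (key k).1 i 0 hi (by omega) (by omega)
    | succ j =>
      have h1 := hshift k (key k).1 (key k).2 i j hi (by omega)
      have h2 := hLsucc i j k hi (by omega)
      simp only [show j + 1 + 1 = j + 2 by omega]
      linarith
  refine ⟨hstep, ?_⟩
  intro i j k hi hk
  induction j with
  | zero => exact fun h => (hLzero i k hi hk (by omega)).ge
  | succ j ih => exact fun h => (ih (by omega)).trans (hstep i j k hi hk h)
end

section
/- For every valid index triple (i,j,k) with k ≥ 1 such that both sides are defined, one has L_{i,j,k} ≤ L_{i+1,j,k}. -/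
/-!
Write `S i j k = ∑_{t ≤ j} D i t k`. The second term of the minimum defining `D` says exactly that
`E i j k = S i j (k-1) - S i j k` is weakly increasing in `i`. Since
`L i j k = E i (j-1) k + D i j (k-1)`, the claim follows once `D` is weakly increasing in its first
index, which is proved by induction on `k`. In the step, both terms of the minimum defining
`D (i+1) j k` are at least `D i j k`: the second one equals `L (i+1) j k - L i j k + D i j k`, and
the first one satisfies `D i (j+1) (k-1) ≥ D (i-1) (j+1) (k-1) ≥ D i j k`.
-/

/-- Lemma 6: `L i j k ≤ L (i+1) j k` whenever both sides are defined. -/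
theorem stmt_5 (n : ℕ) (hn : 1 ≤ n)
    (x : ℕ → ℕ → ℤ)
    (hx0 : ∀ i j : ℕ, 1 ≤ i → 1 ≤ j → i + j ≤ n + 1 → 0 ≤ x i j)
    (hxmono : ∀ i j : ℕ, 1 ≤ i → 1 ≤ j → i + 1 + j ≤ n + 1 → x i j ≤ x (i + 1) j)
    (D : ℕ → ℕ → ℕ → ℤ)
    (hD0 : ∀ i j : ℕ, 1 ≤ i → 1 ≤ j → i + j ≤ n + 1 → D i j 0 = x i j)
    (hD1 : ∀ j k : ℕ, 1 ≤ j → 1 ≤ k → 1 + j + k ≤ n + 2 → D 1 j k = 0)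
    (hDrec : ∀ i j k : ℕ, 2 ≤ i → 1 ≤ j → 1 ≤ k → i + j + k ≤ n + 2 →
      D i j k = min (D (i - 1) (j + 1) (k - 1))
        (∑ t ∈ Finset.Icc 1 j, D i t (k - 1)
          - ∑ t ∈ Finset.Icc 1 (j - 1), D i t k
          - ∑ t ∈ Finset.Icc 1 j, D (i - 1) t (k - 1)
          + ∑ t ∈ Finset.Icc 1 j, D (i - 1) t k))
    (L : ℕ → ℕ → ℕ → ℤ)
    (hL : ∀ i j k : ℕ, 1 ≤ i → 1 ≤ k → i + j + k ≤ n + 2 →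
      L i j k = ∑ t ∈ Finset.Icc 1 j, D i t (k - 1)
        - ∑ t ∈ Finset.Icc 1 (j - 1), D i t k) :
    ∀ i j k : ℕ, 1 ≤ i → 1 ≤ k → i + 1 + j + k ≤ n + 2 →
      L i j k ≤ L (i + 1) j k := by
  -- Monotonicity of `E` in `i`.
  have hE : ∀ i j k : ℕ, 1 ≤ i → i + 1 + j + (k + 1) ≤ n + 2 →
      ∑ t ∈ Finset.Icc 1 j, D i t k - ∑ t ∈ Finset.Icc 1 j, D i t (k + 1) ≤
        ∑ t ∈ Finset.Icc 1 j, D (i + 1) t k - ∑ t ∈ Finset.Icc 1 j, D (i + 1) t (k + 1) := by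
    intro i j k hi h
    rcases j with _ | m
    · simp
    · have hr := hDrec (i + 1) (m + 1) (k + 1) (by omega) (by omega) (by omega) (by omega)
      have hle := hr.le.trans (min_le_right _ _)
      simp only [Nat.add_sub_cancel] at hle
      have hs := Finset.sum_Icc_succ_top (show 1 ≤ m + 1 by omega)
        (fun t => D (i + 1) t (k + 1))
      linarith
  -- Monotonicity of `L` at level `k + 1` follows from that of `D` at level `k`.
  have hstep : ∀ k : ℕ,
      (∀ i j : ℕ, 1 ≤ i → 1 ≤ j → i + 1 + j + k ≤ n + 2 → i + 1 + j ≤ n + 1 →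
        D i j k ≤ D (i + 1) j k) →
      ∀ i m : ℕ, 1 ≤ i → i + 1 + (m + 1) + (k + 1) ≤ n + 2 →
      ∑ t ∈ Finset.Icc 1 (m + 1), D i t k - ∑ t ∈ Finset.Icc 1 m, D i t (k + 1) ≤
        ∑ t ∈ Finset.Icc 1 (m + 1), D (i + 1) t k
          - ∑ t ∈ Finset.Icc 1 m, D (i + 1) t (k + 1) := by
    intro k hk i m hi h
    have h1 := hE i m k hi (by omega)
    have h2 := hk i (m + 1) hi (by omega) (by omega) (by omega)
    rw [Finset.sum_Icc_succ_top (by omega), Finset.sum_Icc_succ_top (by omega)]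
    linarith
  have hmono : ∀ k i j : ℕ, 1 ≤ i → 1 ≤ j → i + 1 + j + k ≤ n + 2 → i + 1 + j ≤ n + 1 →
      D i j k ≤ D (i + 1) j k := by
    intro k
    induction k with
    | zero =>
      intro i j hi hj _ h
      rw [hD0 i j hi hj (by omega), hD0 (i + 1) j (by omega) hj h]
      exact hxmono i j hi hj h
    | succ k ih =>
      intro i j hi hj h _
      -- Nonnegativity of row `1`, needed for the first term of the minimum when `i = 1`.
      have hrow : ∀ j : ℕ, 1 ≤ j → 1 + j + k ≤ n + 2 → 1 + j ≤ n + 1 → 0 ≤ D 1 j k := by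
        intro j hj h h'
        rcases Nat.eq_zero_or_pos k with rfl | hk
        · rw [hD0 1 j le_rfl hj h']
          exact hx0 1 j le_rfl hj h'
        · exact (hD1 j k hj hk h).ge
      obtain ⟨m, rfl⟩ : ∃ m, j = m + 1 := ⟨j - 1, by omega⟩
      rw [hDrec (i + 1) (m + 1) (k + 1) (by omega) hj (by omega) (by omega)]
      simp only [Nat.add_sub_cancel]
      refine le_min ?_ ?_
      · rcases Nat.lt_or_ge 1 i with hi1 | hi1
        · obtain ⟨l, rfl⟩ : ∃ l, i = l + 1 := ⟨i - 1, by omega⟩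
          have hr := hDrec (l + 1) (m + 1) (k + 1) (by omega) hj (by omega) (by omega)
          have hle := hr.le.trans (min_le_left _ _)
          simp only [Nat.add_sub_cancel] at hle
          exact hle.trans (ih l (m + 1 + 1) (by omega) (by omega) (by omega) (by omega))
        · obtain rfl : i = 1 := by omega
          rw [hD1 (m + 1) (k + 1) hj (by omega) (by omega)]
          exact hrow (m + 1 + 1) (by omega) (by omega) (by omega)
      · have h1 := hstep k ih i m hi h
        have hs := Finset.sum_Icc_succ_top (show 1 ≤ m + 1 by omega) (fun t => D i t (k + 1))
        linarith
  intro i j k hi hk h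
  obtain ⟨k, rfl⟩ : ∃ l, k = l + 1 := ⟨k - 1, by omega⟩
  rw [hL i j (k + 1) hi hk (by omega), hL (i + 1) j (k + 1) (by omega) hk h]
  rcases j with _ | m
  · simp
  · exact hstep k (hmono k) i m hi h
end

section
/- For every i and every k ≥ 1 with i + 1 + k ≤ n + 2 (so that both sides are defined), one has D_{i,1,k} ≤ D_{i,1,k-1}; that is, the first-column entries of the extension are weakly decreasing in k. -/
/-- The first-column entries of the extension are weakly decreasing in `k`:
`D i 1 k ≤ D i 1 (k-1)` for every `i` and `k ≥ 1` with `i + 1 + k ≤ n + 2`. -/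
theorem stmt_7 (n : ℕ) (hn : 1 ≤ n)
    (x : ℕ → ℕ → ℤ)
    (hx0 : ∀ i j : ℕ, 1 ≤ i → 1 ≤ j → i + j ≤ n + 1 → 0 ≤ x i j)
    (hxmono : ∀ i j : ℕ, 1 ≤ i → 1 ≤ j → i + 1 + j ≤ n + 1 → x i j ≤ x (i + 1) j)
    (D : ℕ → ℕ → ℕ → ℤ)
    (hD0 : ∀ i j : ℕ, 1 ≤ i → 1 ≤ j → i + j ≤ n + 1 → D i j 0 = x i j)
    (hD1 : ∀ j k : ℕ, 1 ≤ j → 1 ≤ k → 1 + j + k ≤ n + 2 → D 1 j k = 0)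
    (hDrec : ∀ i j k : ℕ, 2 ≤ i → 1 ≤ j → 1 ≤ k → i + j + k ≤ n + 2 →
      D i j k = min (D (i - 1) (j + 1) (k - 1))
        (∑ t ∈ Finset.Icc 1 j, D i t (k - 1)
          - ∑ t ∈ Finset.Icc 1 (j - 1), D i t k
          - ∑ t ∈ Finset.Icc 1 j, D (i - 1) t (k - 1)
          + ∑ t ∈ Finset.Icc 1 j, D (i - 1) t k)) :
    ∀ i k : ℕ, 1 ≤ i → 1 ≤ k → i + 1 + k ≤ n + 2 →
      D i 1 k ≤ D i 1 (k - 1) := by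
  intro i k hi hk
  -- In column `j = 1` the second argument of the minimum is
  -- `D i 1 (k-1) - (D (i-1) 1 (k-1) - D (i-1) 1 k)`, so the claim follows by induction on `i`.
  induction i, hi using Nat.le_induction with
  | base =>
    intro h
    rw [hD1 1 k le_rfl hk h]
    rcases Nat.eq_zero_or_pos (k - 1) with h0 | h0
    · rw [h0, hD0 1 1 le_rfl le_rfl (by omega)]
      exact hx0 1 1 le_rfl le_rfl (by omega)
    · rw [hD1 1 (k - 1) le_rfl h0 (by omega)]
  | succ i hi ih =>
    intro h
    have hprev := ih (by omega)
    have hrec := hDrec (i + 1) 1 k (by omega) le_rfl hk h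
    simp only [Nat.add_sub_cancel, Finset.Icc_self, Finset.sum_singleton, Nat.sub_self,
      Finset.Icc_eq_empty_of_lt Nat.zero_lt_one, Finset.sum_empty] at hrec
    have hle := hrec.le.trans (min_le_right _ _)
    linarith
end

section
/- For every valid index triple (i,j,k) with k ≥ 1 and j ≥ 1 such that both sides are defined (i.e. i + j + k + 1 ≤ n + 2), one has L_{i,j,k+1} ≤ L_{i,j,k}. -/
/-!
At each depth `k` the array `L · · k` is a last passage time: with the weights
`w i j = D i j (k-1) - D (i-1) j (k-1)`, the recursion for `D` unfolds to
`L i (j+1) k = w i (j+1) + max (L i j k) (L (i-1) (j+1) k)`, and the weights at the next depth are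
`w' i j = min (L i j k) (L (i-1) (j+1) k) - L (i-1) j k`.

Writing `L'` for `L · · (k+1)`, the stronger bound `L' i j ≤ min (L i j k) (L (i-1) (j+1) k)` then
follows for `i ≥ 2` by induction on `i` and, inside, on `j`: the two predecessors `L' (i-1) j` and `L' i (j-1)`
of `L' i j` (only the first when `j = 1`) are at most `L (i-1) j k` by induction, and adding `w' i j` gives the bound.
In the row `i = 1` one has `L' = 0`, so only `L 1 j k ≥ 0` is needed.
-/

/-- Lemma (rows shrink with depth): `L i j (k+1) ≤ L i j k` whenever both
sides are defined (`j ≥ 1`, `k ≥ 1`, `i + j + k + 1 ≤ n + 2`). -/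
theorem stmt_8 (n : ℕ) (hn : 1 ≤ n)
    (x : ℕ → ℕ → ℤ)
    (hx0 : ∀ i j : ℕ, 1 ≤ i → 1 ≤ j → i + j ≤ n + 1 → 0 ≤ x i j)
    (hxmono : ∀ i j : ℕ, 1 ≤ i → 1 ≤ j → i + 1 + j ≤ n + 1 → x i j ≤ x (i + 1) j)
    (D : ℕ → ℕ → ℕ → ℤ)
    (hD0 : ∀ i j : ℕ, 1 ≤ i → 1 ≤ j → i + j ≤ n + 1 → D i j 0 = x i j)
    (hD1 : ∀ j k : ℕ, 1 ≤ j → 1 ≤ k → 1 + j + k ≤ n + 2 → D 1 j k = 0)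
    (hDrec : ∀ i j k : ℕ, 2 ≤ i → 1 ≤ j → 1 ≤ k → i + j + k ≤ n + 2 →
      D i j k = min (D (i - 1) (j + 1) (k - 1))
        (∑ t ∈ Finset.Icc 1 j, D i t (k - 1)
          - ∑ t ∈ Finset.Icc 1 (j - 1), D i t k
          - ∑ t ∈ Finset.Icc 1 j, D (i - 1) t (k - 1)
          + ∑ t ∈ Finset.Icc 1 j, D (i - 1) t k))
    (L : ℕ → ℕ → ℕ → ℤ)
    (hL : ∀ i j k : ℕ, 1 ≤ i → 1 ≤ k → i + j + k ≤ n + 2 →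
      L i j k = ∑ t ∈ Finset.Icc 1 j, D i t (k - 1)
        - ∑ t ∈ Finset.Icc 1 (j - 1), D i t k) :
    ∀ i j k : ℕ, 1 ≤ i → 1 ≤ j → 1 ≤ k → i + j + k + 1 ≤ n + 2 →
      L i j (k + 1) ≤ L i j k := by
  have hL1 : ∀ i k : ℕ, 1 ≤ i → i + 1 + (k + 1) ≤ n + 2 → L i 1 (k + 1) = D i 1 k := by
    intro i k hi h
    rw [hL i 1 (k + 1) hi (by omega) h]
    simp
  have hLs : ∀ i j k : ℕ, 1 ≤ i → i + (j + 2) + (k + 1) ≤ n + 2 →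
      L i (j + 2) (k + 1) = L i (j + 1) (k + 1) + D i (j + 2) k - D i (j + 1) (k + 1) := by
    intro i j k hi h
    rw [hL i (j + 2) (k + 1) hi (by omega) h, hL i (j + 1) (k + 1) hi (by omega) (by omega)]
    simp only [Nat.add_sub_cancel, show j + 2 - 1 = j + 1 by omega]
    rw [Finset.sum_Icc_succ_top (by omega : 1 ≤ j + 1 + 1),
      Finset.sum_Icc_succ_top (by omega : 1 ≤ j + 1) (fun t => D i t (k + 1))]
    ring
  have hrec : ∀ i j k : ℕ, 1 ≤ i → i + 1 + (j + 1) + (k + 1) ≤ n + 2 →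
      D (i + 1) (j + 1) (k + 1) = min (D i (j + 2) k)
        (L (i + 1) (j + 1) (k + 1) - L i (j + 1) (k + 1) + D i (j + 1) (k + 1)) := by
    intro i j k hi h
    rw [hDrec (i + 1) (j + 1) (k + 1) (by omega) (by omega) (by omega) h,
      hL (i + 1) (j + 1) (k + 1) (by omega) (by omega) h,
      hL i (j + 1) (k + 1) hi (by omega) (by omega)]
    simp only [Nat.add_sub_cancel]
    rw [Finset.sum_Icc_succ_top (by omega : 1 ≤ j + 1) (fun t => D i t (k + 1))]
    congr 1
    ring
  have hrow1 : ∀ j k : ℕ, 1 + (j + 1) + (k + 2) ≤ n + 2 →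
      L 1 (j + 1) (k + 2) ≤ L 1 (j + 1) (k + 1) := by
    intro j k h
    have hz : ∀ m l : ℕ, 1 ≤ l → 1 + m + l ≤ n + 2 → ∑ t ∈ Finset.Icc 1 m, D 1 t l = 0 := by
      intro m l hl hm
      refine Finset.sum_eq_zero fun t ht => ?_
      rw [Finset.mem_Icc] at ht
      exact hD1 t l ht.1 hl (by omega)
    rw [hL 1 (j + 1) (k + 2) le_rfl (by omega) h, hL 1 (j + 1) (k + 1) le_rfl (by omega) (by omega)]
    simp only [Nat.add_sub_cancel, show k + 2 - 1 = k + 1 by omega]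
    rw [hz (j + 1) (k + 1) (by omega) (by omega), hz j (k + 2) (by omega) (by omega),
      hz j (k + 1) (by omega) (by omega)]
    have : 0 ≤ ∑ t ∈ Finset.Icc 1 (j + 1), D 1 t k := by
      refine Finset.sum_nonneg fun t ht => ?_
      rw [Finset.mem_Icc] at ht
      rcases Nat.eq_zero_or_pos k with rfl | hk
      · rw [hD0 1 t le_rfl ht.1 (by omega)]
        exact hx0 1 t le_rfl ht.1 (by omega)
      · exact (hD1 t k ht.1 hk (by omega)).ge
    linarith
  -- One row of the percolation induction: given the first bound on row `i`, both bounds hold on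
  -- row `i + 1`.
  have hstep : ∀ i k : ℕ, 1 ≤ i →
      (∀ j : ℕ, i + (j + 1) + (k + 2) ≤ n + 2 → L i (j + 1) (k + 2) ≤ L i (j + 1) (k + 1)) →
      ∀ j : ℕ, i + 1 + (j + 1) + (k + 2) ≤ n + 2 →
        L (i + 1) (j + 1) (k + 2) ≤ L (i + 1) (j + 1) (k + 1) ∧
        L (i + 1) (j + 1) (k + 2) ≤ L i (j + 2) (k + 1) := by
    intro i k hi ih j
    induction j with
    | zero =>
      intro h
      have e1 : L (i + 1) 1 (k + 2) = _ := hL1 (i + 1) (k + 1) (by omega) (by omega)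
      have e2 : L i 1 (k + 2) = _ := hL1 i (k + 1) hi (by omega)
      have e3 := hrec i 0 k hi (by omega)
      have e4 := hLs i 0 k hi (by omega)
      have e5 := ih 0 (by omega)
      simp only [Nat.zero_add] at e3 e4 e5 ⊢
      omega
    | succ j jh =>
      intro h
      have e0 := jh (by omega)
      have e1 : L (i + 1) (j + 2) (k + 2) = _ := hLs (i + 1) j (k + 1) (by omega) (by omega)
      have e2 : L i (j + 2) (k + 2) = _ := hLs i j (k + 1) hi (by omega)
      have e3 : D (i + 1) (j + 2) (k + 1) = _ := hrec i (j + 1) k hi (by omega)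
      have e4 : L i (j + 3) (k + 1) = _ := hLs i (j + 1) k hi (by omega)
      have e5 : L i (j + 2) (k + 2) ≤ L i (j + 2) (k + 1) := ih (j + 1) (by omega)
      have e6 : D (i + 1) (j + 1) (k + 2) = _ := hrec i j (k + 1) hi (by omega)
      simp only [Nat.add_assoc, Nat.reduceAdd] at *
      omega
  have hmain : ∀ i k : ℕ, 1 ≤ i → ∀ j : ℕ, i + (j + 1) + (k + 2) ≤ n + 2 →
      L i (j + 1) (k + 2) ≤ L i (j + 1) (k + 1) := by
    intro i k hi
    induction i, hi using Nat.le_induction with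
    | base => exact fun j => hrow1 j k
    | succ i hi ih => exact fun j h => (hstep i k hi ih j h).1
  intro i j k hi hj hk h
  obtain ⟨j, rfl⟩ := Nat.exists_eq_add_of_le' hj
  obtain ⟨k, rfl⟩ := Nat.exists_eq_add_of_le' hk
  exact hmain i k hi j (by omega)
end

section
/- For every valid index triple (i,j,k) with k ≥ 1 and j ≥ 1 such that both sides are defined (i.e. i + j + k + 1 ≤ n + 2), one has L_{i,j,k+1} ≤ L_{i,j+1,k}. -/
/-!
For fixed `k`, the array `L · · k` is a last passage time: with the weights
`w i j k = D i j (k-1) - D (i-1) j (k-1)` one has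
`L (i+1) (j+1) k = w (i+1) (j+1) k + max (L (i+1) j k) (L i (j+1) k)` (`hlpp`).
The weights of the next level are the dual ones (`hdual`):
`w (i+1) j (k+1) = min (L i (j+1) k) (L (i+1) j k) - L i j k`.

Nonnegativity of the weights at level `k` makes `L · · k` increasing in `i` and in `j`, and then the
dual formula makes the weights at level `k+1` nonnegative; so monotonicity holds at every level.
Combining the two formulas, an induction on `i` and `j` gives
`L (i+1) j (k+1) ≤ min (L i (j+1) k) (L (i+1) j k)`: both terms of the maximum are at most `L i j k`
by induction, which cancels the subtracted `L i j k`.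
Since `L i (j+1) k ≤ L (i+1) (j+1) k`, the theorem follows.
-/

/-- `L i j (k+1) ≤ L i (j+1) k` whenever both sides are defined
(`j ≥ 1`, `k ≥ 1`, `i + j + k + 1 ≤ n + 2`). -/
theorem stmt_9 (n : ℕ) (hn : 1 ≤ n)
    (x : ℕ → ℕ → ℤ)
    (hx0 : ∀ i j : ℕ, 1 ≤ i → 1 ≤ j → i + j ≤ n + 1 → 0 ≤ x i j)
    (hxmono : ∀ i j : ℕ, 1 ≤ i → 1 ≤ j → i + 1 + j ≤ n + 1 → x i j ≤ x (i + 1) j)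
    (D : ℕ → ℕ → ℕ → ℤ)
    (hD0 : ∀ i j : ℕ, 1 ≤ i → 1 ≤ j → i + j ≤ n + 1 → D i j 0 = x i j)
    (hD1 : ∀ j k : ℕ, 1 ≤ j → 1 ≤ k → 1 + j + k ≤ n + 2 → D 1 j k = 0)
    (hDrec : ∀ i j k : ℕ, 2 ≤ i → 1 ≤ j → 1 ≤ k → i + j + k ≤ n + 2 →
      D i j k = min (D (i - 1) (j + 1) (k - 1))
        (∑ t ∈ Finset.Icc 1 j, D i t (k - 1)
          - ∑ t ∈ Finset.Icc 1 (j - 1), D i t k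
          - ∑ t ∈ Finset.Icc 1 j, D (i - 1) t (k - 1)
          + ∑ t ∈ Finset.Icc 1 j, D (i - 1) t k))
    (L : ℕ → ℕ → ℕ → ℤ)
    (hL : ∀ i j k : ℕ, 1 ≤ i → 1 ≤ k → i + j + k ≤ n + 2 →
      L i j k = ∑ t ∈ Finset.Icc 1 j, D i t (k - 1)
        - ∑ t ∈ Finset.Icc 1 (j - 1), D i t k) :
    ∀ i j k : ℕ, 1 ≤ i → 1 ≤ j → 1 ≤ k → i + j + k + 1 ≤ n + 2 →
      L i j (k + 1) ≤ L i (j + 1) k := by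
  -- Levels are written `k + 1` below, so that `L · · (k + 1)` involves `D · · k` and `D · · (k + 1)`.
  have hone : ∀ i k : ℕ, 1 ≤ i → i + 1 + (k + 1) ≤ n + 2 → L i 1 (k + 1) = D i 1 k := by
    intro i k hi h
    rw [hL i 1 (k + 1) hi (by omega) h]
    simp
  have hstep : ∀ i j k : ℕ, 1 ≤ i → 1 ≤ j → i + (j + 1) + (k + 1) ≤ n + 2 →
      L i (j + 1) (k + 1) = L i j (k + 1) + D i (j + 1) k - D i j (k + 1) := by
    intro i j k hi hj h
    obtain ⟨j, rfl⟩ := Nat.exists_eq_add_of_le' hj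
    rw [hL i (j + 1 + 1) (k + 1) hi (by omega) h, hL i (j + 1) (k + 1) hi (by omega) (by omega)]
    simp only [Nat.add_sub_cancel]
    rw [Finset.sum_Icc_succ_top (by omega : 1 ≤ j + 1 + 1) (fun t => D i t k),
      Finset.sum_Icc_succ_top (by omega : 1 ≤ j + 1) (fun t => D i t (k + 1))]
    ring
  have hrec : ∀ i j k : ℕ, 1 ≤ i → 1 ≤ j → i + 1 + j + (k + 1) ≤ n + 2 →
      D (i + 1) j (k + 1) =
        D i (j + 1) k + min 0 (L (i + 1) j (k + 1) - L i (j + 1) (k + 1)) := by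
    intro i j k hi hj h
    have h1 := hDrec (i + 1) j (k + 1) (by omega) hj (by omega) h
    have h2 := hL (i + 1) j (k + 1) (by omega) (by omega) h
    have h3 := hL i (j + 1) (k + 1) hi (by omega) (by omega)
    simp only [Nat.add_sub_cancel] at h1 h2 h3
    rw [Finset.sum_Icc_succ_top (by omega : 1 ≤ j + 1) (fun t => D i t k)] at h3
    omega
  have hlpp : ∀ i j k : ℕ, 1 ≤ i → 1 ≤ j → i + 1 + (j + 1) + (k + 1) ≤ n + 2 →
      L (i + 1) (j + 1) (k + 1) = D (i + 1) (j + 1) k - D i (j + 1) k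
        + max (L (i + 1) j (k + 1)) (L i (j + 1) (k + 1)) := by
    intro i j k hi hj h
    have h1 := hstep (i + 1) j k (by omega) hj h
    have h2 := hrec i j k hi hj (by omega)
    omega
  have hdual : ∀ i j k : ℕ, 1 ≤ i → 1 ≤ j → i + 1 + j + (k + 1) ≤ n + 2 →
      D (i + 1) j (k + 1) - D i j (k + 1) =
        min (L i (j + 1) (k + 1)) (L (i + 1) j (k + 1)) - L i j (k + 1) := by
    intro i j k hi hj h
    have h1 := hstep i j k hi hj (by omega)
    have h2 := hrec i j k hi hj h
    omega
  have hD1nonneg : ∀ j k : ℕ, 1 ≤ j → 1 + j + (k + 1) ≤ n + 2 → 0 ≤ D 1 j k := by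
    intro j k hj h
    rcases Nat.eq_zero_or_pos k with rfl | hk
    · rw [hD0 1 j le_rfl hj (by omega)]
      exact hx0 1 j le_rfl hj (by omega)
    · exact (hD1 j k hj hk (by omega)).ge
  have hLi_of : ∀ k : ℕ,
      (∀ i j : ℕ, 1 ≤ i → 1 ≤ j → i + 1 + j + (k + 1) ≤ n + 2 → D i j k ≤ D (i + 1) j k) →
      ∀ i j : ℕ, 1 ≤ i → 1 ≤ j → i + 1 + j + (k + 1) ≤ n + 2 →
        L i j (k + 1) ≤ L (i + 1) j (k + 1) := by
    intro k hmono i j hi hj h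
    have hw := hmono i j hi hj h
    obtain rfl | hj2 := hj.eq_or_lt
    · rw [hone i k hi (by omega), hone (i + 1) k (by omega) h]
      exact hw
    · obtain ⟨j, rfl⟩ := Nat.exists_eq_add_of_le' hj
      have h1 := hlpp i j k hi (by omega) h
      omega
  have hLj_of : ∀ k : ℕ,
      (∀ i j : ℕ, 1 ≤ i → 1 ≤ j → i + 1 + j + (k + 1) ≤ n + 2 → D i j k ≤ D (i + 1) j k) →
      ∀ i j : ℕ, 1 ≤ i → 1 ≤ j → i + (j + 1) + (k + 1) ≤ n + 2 →
        L i j (k + 1) ≤ L i (j + 1) (k + 1) := by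
    intro k hmono i j hi hj h
    obtain rfl | hi2 := hi.eq_or_lt
    · have h1 := hstep 1 j k le_rfl hj h
      have h2 := hD1 j (k + 1) hj (by omega) (by omega)
      have h3 := hD1nonneg (j + 1) k (by omega) h
      omega
    · obtain ⟨i, rfl⟩ := Nat.exists_eq_add_of_le' hi
      have h1 := hlpp i j k (by omega) hj h
      have hw := hmono i (j + 1) (by omega) (by omega) h
      omega
  have hDmono : ∀ k i j : ℕ, 1 ≤ i → 1 ≤ j → i + 1 + j + (k + 1) ≤ n + 2 →
      D i j k ≤ D (i + 1) j k := by
    intro k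
    induction k with
    | zero =>
      intro i j hi hj h
      rw [hD0 i j hi hj (by omega), hD0 (i + 1) j (by omega) hj (by omega)]
      exact hxmono i j hi hj (by omega)
    | succ k ih =>
      intro i j hi hj h
      have h1 := hdual i j k hi hj (by omega)
      have h2 := hLi_of k ih i j hi hj (by omega)
      have h3 := hLj_of k ih i j hi hj (by omega)
      omega
  have hLi := fun k => hLi_of k (hDmono k)
  have hLj := fun k => hLj_of k (hDmono k)
  have hL1nonneg : ∀ j k : ℕ, 1 ≤ j → 1 + j + (k + 1) ≤ n + 2 → 0 ≤ L 1 j (k + 1) := by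
    intro j k hj
    induction j, hj using Nat.le_induction with
    | base =>
      intro h
      rw [hone 1 k le_rfl h]
      exact hD1nonneg 1 k le_rfl h
    | succ j hj ih =>
      intro h
      exact (ih (by omega)).trans (hLj k 1 j le_rfl hj h)
  have hL1zero : ∀ j k : ℕ, 1 ≤ j → 1 + j + (k + 2) ≤ n + 2 → L 1 j (k + 2) = 0 := by
    intro j k hj
    induction j, hj using Nat.le_induction with
    | base =>
      intro h
      rw [hone 1 (k + 1) le_rfl h]
      exact hD1 1 (k + 1) le_rfl (by omega) (by omega)
    | succ j hj ih =>
      intro h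
      rw [hstep 1 j (k + 1) le_rfl hj h, ih (by omega),
        hD1 (j + 1) (k + 1) (by omega) (by omega) (by omega),
        hD1 j (k + 1 + 1) hj (by omega) (by omega)]
      simp
  -- One row of the comparison: row `i` at levels `k + 1`, `k + 2` controls row `i + 1`.
  have hrow : ∀ i k : ℕ, 1 ≤ i →
      (∀ j : ℕ, 1 ≤ j → i + j + (k + 2) ≤ n + 2 → L i j (k + 2) ≤ L i j (k + 1)) →
      ∀ j : ℕ, 1 ≤ j → i + 1 + j + (k + 2) ≤ n + 2 →
        L (i + 1) j (k + 2) ≤ min (L i (j + 1) (k + 1)) (L (i + 1) j (k + 1)) := by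
    intro i k hi hQ j hj
    induction j, hj using Nat.le_induction with
    | base =>
      intro h
      have h1 := hone (i + 1) (k + 1) (by omega) h
      have h2 := hone i (k + 1) hi (by omega)
      have h3 := hdual i 1 k hi le_rfl (by omega)
      have h4 := hQ 1 le_rfl (by omega)
      rw [h2] at h4
      rw [h1]
      omega
    | succ j hj ih =>
      intro h
      have h1 : L (i + 1) (j + 1) (k + 2) = D (i + 1) (j + 1) (k + 1) - D i (j + 1) (k + 1)
          + max (L (i + 1) j (k + 2)) (L i (j + 1) (k + 2)) := hlpp i j (k + 1) hi hj h
      have h2 := hdual i (j + 1) k hi (by omega) (by omega)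
      have h3 := (ih (by omega)).trans (min_le_left _ _)
      have h4 := hQ (j + 1) (by omega) (by omega)
      have h5 := max_le h3 h4
      rw [h1, h2]
      linarith
  have hlevel : ∀ i k : ℕ, 1 ≤ i →
      ∀ j : ℕ, 1 ≤ j → i + j + (k + 2) ≤ n + 2 → L i j (k + 2) ≤ L i j (k + 1) := by
    intro i k hi
    induction i, hi using Nat.le_induction with
    | base =>
      intro j hj h
      rw [hL1zero j k hj h]
      exact hL1nonneg j k hj (by omega)
    | succ i hi ih =>
      intro j hj h
      exact (hrow i k hi ih j hj h).trans (min_le_right _ _)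
  intro i j k hi hj hk h
  obtain ⟨k, rfl⟩ := Nat.exists_eq_add_of_le' hk
  obtain rfl | hi2 := hi.eq_or_lt
  · exact (hL1zero j k hj (by omega)).trans_le (hL1nonneg (j + 1) k (by omega) (by omega))
  · obtain ⟨i, rfl⟩ := Nat.exists_eq_add_of_le' hi
    exact ((hrow i k (by omega) (hlevel i k (by omega)) j hj (by omega)).trans
      (min_le_left _ _)).trans (hLi k i (j + 1) (by omega) (by omega) (by omega))
end

section
/- For every valid index triple (i,j,k) with i ≥ 2, j ≥ 1 and k ≥ 2 (so that both sides are defined), one has L_{i,j,k} ≤ L_{i-1,j+1,k-1}. -/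
/-!
For fixed `k`, the array `L · · k` satisfies a last-passage percolation recursion
`L i j k = max (L i (j-1) k) (L (i-1) j k) + w i j k` with weights
`w i j k = D i j (k-1) - D (i-1) j (k-1)` (fact `F3` in the proof), and the weights of the next
layer are `w i j (k+1) = min (L i j k) (L (i-1) (j+1) k) - L (i-1) j k` (fact `F4`).

One proves simultaneously, by induction on `i` and then on `j`,
`L i j (k+1) ≤ L i j k` and `L i j (k+1) ≤ L (i-1) (j+1) k`.
Indeed the two induction hypotheses at `(i-1, j)` and `(i, j-1)` give
`max (L i (j-1) (k+1)) (L (i-1) j (k+1)) ≤ L (i-1) j k`, and adding `w i j (k+1)` yields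
`L i j (k+1) ≤ min (L i j k) (L (i-1) (j+1) k)` (`key`; for `j = 1` the recursion has only the
term from `i - 1`). The row `i = 1` starts the induction: there `L` vanishes for `k ≥ 2` and is
a sum of non-negative entries for `k = 1`.
-/

/-- `L i j k ≤ L (i-1) (j+1) (k-1)` for every valid triple with
`i ≥ 2`, `j ≥ 1`, `k ≥ 2`. -/
theorem stmt_10 (n : ℕ) (hn : 1 ≤ n)
    (x : ℕ → ℕ → ℤ)
    (hx0 : ∀ i j : ℕ, 1 ≤ i → 1 ≤ j → i + j ≤ n + 1 → 0 ≤ x i j)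
    (hxmono : ∀ i j : ℕ, 1 ≤ i → 1 ≤ j → i + 1 + j ≤ n + 1 → x i j ≤ x (i + 1) j)
    (D : ℕ → ℕ → ℕ → ℤ)
    (hD0 : ∀ i j : ℕ, 1 ≤ i → 1 ≤ j → i + j ≤ n + 1 → D i j 0 = x i j)
    (hD1 : ∀ j k : ℕ, 1 ≤ j → 1 ≤ k → 1 + j + k ≤ n + 2 → D 1 j k = 0)
    (hDrec : ∀ i j k : ℕ, 2 ≤ i → 1 ≤ j → 1 ≤ k → i + j + k ≤ n + 2 →
      D i j k = min (D (i - 1) (j + 1) (k - 1))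
        (∑ t ∈ Finset.Icc 1 j, D i t (k - 1)
          - ∑ t ∈ Finset.Icc 1 (j - 1), D i t k
          - ∑ t ∈ Finset.Icc 1 j, D (i - 1) t (k - 1)
          + ∑ t ∈ Finset.Icc 1 j, D (i - 1) t k))
    (L : ℕ → ℕ → ℕ → ℤ)
    (hL : ∀ i j k : ℕ, 1 ≤ i → 1 ≤ k → i + j + k ≤ n + 2 →
      L i j k = ∑ t ∈ Finset.Icc 1 j, D i t (k - 1)
        - ∑ t ∈ Finset.Icc 1 (j - 1), D i t k) :
    ∀ i j k : ℕ, 2 ≤ i → 1 ≤ j → 2 ≤ k → i + j + k ≤ n + 2 →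
      L i j k ≤ L (i - 1) (j + 1) (k - 1) := by
  -- The definitions of `L` and `D`, rewritten without sums.
  have F0 : ∀ i k : ℕ, 1 ≤ i → i + 1 + (k + 1) ≤ n + 2 → L i 1 (k + 1) = D i 1 k := by
    intro i k hi h
    rw [hL i 1 (k + 1) hi (by omega) h]
    simp
  have F1 : ∀ i j k : ℕ, 1 ≤ i → 1 ≤ j → i + (j + 1) + (k + 1) ≤ n + 2 →
      L i (j + 1) (k + 1) = L i j (k + 1) + D i (j + 1) k - D i j (k + 1) := by
    intro i j k hi hj h
    obtain ⟨m, rfl⟩ : ∃ m, j = m + 1 := ⟨j - 1, by omega⟩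
    rw [hL i (m + 1 + 1) (k + 1) hi (by omega) h, hL i (m + 1) (k + 1) hi (by omega) (by omega)]
    simp only [Nat.add_sub_cancel]
    rw [Finset.sum_Icc_succ_top (show 1 ≤ m + 1 + 1 by omega),
      Finset.sum_Icc_succ_top (show 1 ≤ m + 1 by omega) (fun t => D i t (k + 1))]
    ring
  have F2 : ∀ i j k : ℕ, 1 ≤ i → 1 ≤ j → i + 1 + j + (k + 1) ≤ n + 2 →
      D (i + 1) j (k + 1)
        = min (D i (j + 1) k) (L (i + 1) j (k + 1) - L i j (k + 1) + D i j (k + 1)) := by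
    intro i j k hi hj h
    obtain ⟨m, rfl⟩ : ∃ m, j = m + 1 := ⟨j - 1, by omega⟩
    rw [hDrec (i + 1) (m + 1) (k + 1) (by omega) hj (by omega) h,
      hL (i + 1) (m + 1) (k + 1) (by omega) (by omega) h,
      hL i (m + 1) (k + 1) hi (by omega) (by omega)]
    simp only [Nat.add_sub_cancel]
    rw [Finset.sum_Icc_succ_top (show 1 ≤ m + 1 by omega) (fun t => D i t (k + 1))]
    congr 1
    ring
  -- Last-passage recursion inside a layer.
  have F3 : ∀ i j k : ℕ, 1 ≤ i → 1 ≤ j → i + 1 + (j + 1) + (k + 1) ≤ n + 2 →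
      L (i + 1) (j + 1) (k + 1)
        = max (L (i + 1) j (k + 1)) (L i (j + 1) (k + 1)) + (D (i + 1) (j + 1) k - D i (j + 1) k) := by
    intro i j k hi hj h
    have h1 := F1 (i + 1) j k (by omega) hj h
    have h2 := F1 i j k hi hj (by omega)
    have h3 := F2 i j k hi hj (by omega)
    omega
  -- Weights of the next layer.
  have F4 : ∀ i j k : ℕ, 1 ≤ i → 1 ≤ j → i + 1 + j + (k + 1) ≤ n + 2 →
      D (i + 1) j (k + 1) - D i j (k + 1)
        = min (L (i + 1) j (k + 1)) (L i (j + 1) (k + 1)) - L i j (k + 1) := by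
    intro i j k hi hj h
    have h2 := F1 i j k hi hj (by omega)
    have h3 := F2 i j k hi hj h
    omega
  have hD1nonneg : ∀ j k : ℕ, 1 ≤ j → 1 + j + (k + 1) ≤ n + 2 → 0 ≤ D 1 j k := by
    intro j k hj h
    rcases Nat.eq_zero_or_pos k with rfl | hk
    · rw [hD0 1 j le_rfl hj (by omega)]
      exact hx0 1 j le_rfl hj (by omega)
    · rw [hD1 j k hj hk (by omega)]
  have row_one_nonneg : ∀ j k : ℕ, 1 ≤ j → 1 + j + (k + 1) ≤ n + 2 → 0 ≤ L 1 j (k + 1) := by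
    intro j k hj
    induction j, hj using Nat.le_induction with
    | base =>
      intro h
      rw [F0 1 k le_rfl h]
      exact hD1nonneg 1 k le_rfl h
    | succ j hj ih =>
      intro h
      have h1 := F1 1 j k le_rfl hj h
      have h2 := hD1 j (k + 1) hj (by omega) (by omega)
      have h3 := hD1nonneg (j + 1) k (by omega) h
      have h4 := ih (by omega)
      omega
  have row_one_zero : ∀ j k : ℕ, 1 ≤ j → 1 + j + (k + 2) ≤ n + 2 → L 1 j (k + 2) = 0 := by
    intro j k hj
    induction j, hj using Nat.le_induction with
    | base =>
      intro h
      rw [F0 1 (k + 1) le_rfl h]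
      exact hD1 1 (k + 1) le_rfl (by omega) (by omega)
    | succ j hj ih =>
      intro h
      have h1 := F1 1 j (k + 1) le_rfl hj h
      have h2 := hD1 j (k + 1 + 1) hj (by omega) (by omega)
      have h3 := hD1 (j + 1) (k + 1) (by omega) (by omega) (by omega)
      have h4 := ih (by omega)
      have h5 : L 1 j (k + 1 + 1) = 0 := h4
      have h6 : L 1 (j + 1) (k + 1 + 1) = 0 := by omega
      exact h6
  have key : ∀ k i : ℕ, 1 ≤ i → ∀ j : ℕ, 1 ≤ j → i + 1 + j + (k + 2) ≤ n + 2 →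
      (∀ j : ℕ, 1 ≤ j → i + j + (k + 2) ≤ n + 2 → L i j (k + 2) ≤ L i j (k + 1)) →
      L (i + 1) j (k + 2) ≤ min (L (i + 1) j (k + 1)) (L i (j + 1) (k + 1)) := by
    intro k i hi j hj
    induction j, hj using Nat.le_induction with
    | base =>
      intro h hrow
      have h1 := F0 (i + 1) (k + 1) (by omega) h
      have h2 := F0 i (k + 1) hi (by omega)
      have h3 := F4 i 1 k hi le_rfl (by omega)
      have h4 := hrow 1 le_rfl (by omega)
      simp only [Nat.reduceAdd, add_assoc] at *
      omega
    | succ j hj ih =>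
      intro h hrow
      have h1 := F3 i j (k + 1) hi hj h
      have h2 := F4 i (j + 1) k hi (by omega) (by omega)
      have h3 := hrow (j + 1) (by omega) (by omega)
      have h4 := ih (by omega) hrow
      simp only [Nat.reduceAdd, add_assoc] at *
      omega
  have layer_antitone : ∀ k i : ℕ, 1 ≤ i → ∀ j : ℕ, 1 ≤ j → i + j + (k + 2) ≤ n + 2 →
      L i j (k + 2) ≤ L i j (k + 1) := by
    intro k i hi
    induction i, hi using Nat.le_induction with
    | base =>
      intro j hj h
      rw [row_one_zero j k hj h]
      exact row_one_nonneg j k hj (by omega)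
    | succ i hi ih =>
      intro j hj h
      exact (key k i hi j hj h ih).trans (min_le_left _ _)
  intro i j k hi hj hk h
  obtain ⟨i, rfl⟩ : ∃ m, i = m + 1 := ⟨i - 1, by omega⟩
  obtain ⟨k, rfl⟩ : ∃ m, k = m + 2 := ⟨k - 2, by omega⟩
  exact (key k i (by omega) j hj h (layer_antitone k i (by omega))).trans (min_le_right _ _)
end

section
/- For every valid index triple (i,j,k) with j ≥ 1 and k ≥ 1, if L_{i,j,k} = 0 then D_{i,j,k-1} = 0 and D_{i,j,k} = 0 (the latter whenever D_{i,j,k} is defined, i.e. i + j + k ≤ n + 2). -/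
/-!
Write `M i j k = ∑_{t ≤ j} (D i t k - D i t (k+1))`, so that `L i j (k+1) = M i (j-1) k + D i j k`
and the recursion reads
`D i j (k+1) = min (D (i-1) (j+1) k) (L i j (k+1) - M (i-1) j k)`.
The second entry of the minimum makes `M` weakly increasing in `i`. If `D · · k` is weakly
increasing in `i`, then so is `L · j (k+1)`, whence
`L (i+1) j (k+1) - M i j k ≥ L i j (k+1) - M i j k = D i j (k+1)`; together with the first entry of
the minimum this shows that `D · · (k+1)` is weakly increasing in `i`, and, since it vanishes at
`i = 1`, non-negative. By induction this holds at every level `k`. Consequently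
`M i j k ≥ M 1 j k ≥ 0`, and `L i j (k+1) = 0` forces `M i (j-1) k = D i j k = 0`; finally
`0 ≤ M i j k = -D i j (k+1) ≤ 0`.
-/

/-- The partial sum `∑_{t=1}^{j} (D i t k - D i t (k+1))`, equal to `L i j (k+1) - D i j (k+1)`
for `j ≥ 1`. -/
def levelDiff (D : ℕ → ℕ → ℕ → ℤ) (i j k : ℕ) : ℤ :=
  ∑ t ∈ Finset.Icc 1 j, D i t k - ∑ t ∈ Finset.Icc 1 j, D i t (k + 1)

lemma levelDiff_zero (D : ℕ → ℕ → ℕ → ℤ) (i k : ℕ) : levelDiff D i 0 k = 0 := by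
  simp [levelDiff]

lemma levelDiff_succ (D : ℕ → ℕ → ℕ → ℤ) (i j k : ℕ) :
    levelDiff D i (j + 1) k = levelDiff D i j k + D i (j + 1) k - D i (j + 1) (k + 1) := by
  simp only [levelDiff, Finset.sum_Icc_succ_top (Nat.le_add_left 1 j)]
  ring

/-- If `L i j k = 0` (with `j ≥ 1`, `k ≥ 1`) then `D i j (k-1) = 0` and
`D i j k = 0`. -/
theorem stmt_11 (n : ℕ) (hn : 1 ≤ n)
    (x : ℕ → ℕ → ℤ)
    (hx0 : ∀ i j : ℕ, 1 ≤ i → 1 ≤ j → i + j ≤ n + 1 → 0 ≤ x i j)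
    (hxmono : ∀ i j : ℕ, 1 ≤ i → 1 ≤ j → i + 1 + j ≤ n + 1 → x i j ≤ x (i + 1) j)
    (D : ℕ → ℕ → ℕ → ℤ)
    (hD0 : ∀ i j : ℕ, 1 ≤ i → 1 ≤ j → i + j ≤ n + 1 → D i j 0 = x i j)
    (hD1 : ∀ j k : ℕ, 1 ≤ j → 1 ≤ k → 1 + j + k ≤ n + 2 → D 1 j k = 0)
    (hDrec : ∀ i j k : ℕ, 2 ≤ i → 1 ≤ j → 1 ≤ k → i + j + k ≤ n + 2 →
      D i j k = min (D (i - 1) (j + 1) (k - 1))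
        (∑ t ∈ Finset.Icc 1 j, D i t (k - 1)
          - ∑ t ∈ Finset.Icc 1 (j - 1), D i t k
          - ∑ t ∈ Finset.Icc 1 j, D (i - 1) t (k - 1)
          + ∑ t ∈ Finset.Icc 1 j, D (i - 1) t k))
    (L : ℕ → ℕ → ℕ → ℤ)
    (hL : ∀ i j k : ℕ, 1 ≤ i → 1 ≤ k → i + j + k ≤ n + 2 →
      L i j k = ∑ t ∈ Finset.Icc 1 j, D i t (k - 1)
        - ∑ t ∈ Finset.Icc 1 (j - 1), D i t k) :
    ∀ i j k : ℕ, 1 ≤ i → 1 ≤ j → 1 ≤ k → i + j + k ≤ n + 2 →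
      L i j k = 0 → D i j (k - 1) = 0 ∧ D i j k = 0 := by
  -- The recursion in terms of `levelDiff`, with shifted indices.
  have hrec : ∀ i j k : ℕ, 1 ≤ i → i + j + k + 3 ≤ n + 2 →
      D (i + 1) (j + 1) (k + 1) = min (D i (j + 2) k)
        (levelDiff D (i + 1) j k + D (i + 1) (j + 1) k - levelDiff D i (j + 1) k) := by
    intro i j k hi h
    rw [hDrec (i + 1) (j + 1) (k + 1) (by omega) (by omega) (by omega) (by omega)]
    simp only [Nat.add_sub_cancel, levelDiff, Finset.sum_Icc_succ_top (Nat.le_add_left 1 j)]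
    congr 1
    ring
  have hM : ∀ i j k : ℕ, 1 ≤ i → i + 1 + j + (k + 1) ≤ n + 2 →
      levelDiff D i j k ≤ levelDiff D (i + 1) j k := by
    intro i j k hi h
    rcases j with _ | j
    · simp [levelDiff_zero]
    · have h1 := hrec i j k hi (by omega)
      have h2 := levelDiff_succ D (i + 1) j k
      have h3 := min_le_right (D i (j + 2) k)
        (levelDiff D (i + 1) j k + D (i + 1) (j + 1) k - levelDiff D i (j + 1) k)
      linarith
  have key : ∀ k : ℕ,
      (∀ i j : ℕ, 1 ≤ i → 1 ≤ j → i + j ≤ n + 1 → i + j + k ≤ n + 2 → 0 ≤ D i j k) ∧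
      (∀ i j : ℕ, 1 ≤ i → 1 ≤ j → i + 1 + j ≤ n + 1 → i + 1 + j + k ≤ n + 2 →
        D i j k ≤ D (i + 1) j k) := by
    intro k
    induction k with
    | zero =>
      refine ⟨fun i j hi hj h _ => ?_, fun i j hi hj h _ => ?_⟩
      · rw [hD0 i j hi hj h]
        exact hx0 i j hi hj h
      · rw [hD0 i j hi hj (by omega), hD0 (i + 1) j (by omega) hj h]
        exact hxmono i j hi hj h
    | succ k ih =>
      obtain ⟨ihn, ihm⟩ := ih
      have mono : ∀ i j : ℕ, 1 ≤ i → 1 ≤ j → i + 1 + j ≤ n + 1 → i + 1 + j + (k + 1) ≤ n + 2 →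
          D i j (k + 1) ≤ D (i + 1) j (k + 1) := by
        intro i j hi hj _ h
        obtain ⟨j, rfl⟩ : ∃ m, j = m + 1 := ⟨j - 1, by omega⟩
        rw [hrec i j k hi (by omega)]
        apply le_min
        · -- The first entry dominates: by the recursion for `i ≥ 2`, by non-negativity for `i = 1`.
          rcases Nat.eq_or_lt_of_le hi with rfl | hi'
          · rw [hD1 (j + 1) (k + 1) hj (by omega) (by omega)]
            exact ihn 1 (j + 2) le_rfl (by omega) (by omega) (by omega)
          · obtain ⟨i, rfl⟩ : ∃ m, i = m + 1 := ⟨i - 1, by omega⟩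
            rw [hrec i j k (by omega) (by omega)]
            exact (min_le_left _ _).trans
              (ihm i (j + 2) (by omega) (by omega) (by omega) (by omega))
        · have h1 := hM i j k hi (by omega)
          have h2 := ihm i (j + 1) hi hj (by omega) (by omega)
          have h3 := levelDiff_succ D i j k
          linarith
      refine ⟨fun i j hi hj _ h => ?_, mono⟩
      induction i, hi using Nat.le_induction with
      | base => rw [hD1 j (k + 1) hj (by omega) (by omega)]
      | succ i hi ih =>
        exact (ih (by omega) (by omega)).trans (mono i j hi hj (by omega) h)
  have hMnonneg : ∀ i j k : ℕ, 1 ≤ i → i + j + (k + 1) ≤ n + 2 → 0 ≤ levelDiff D i j k := by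
    intro i j k hi h
    induction i, hi using Nat.le_induction with
    | base =>
      have hz : ∑ t ∈ Finset.Icc 1 j, D 1 t (k + 1) = 0 := by
        refine Finset.sum_eq_zero fun t ht => ?_
        rw [Finset.mem_Icc] at ht
        exact hD1 t (k + 1) ht.1 (by omega) (by omega)
      rw [levelDiff, hz, sub_zero]
      refine Finset.sum_nonneg fun t ht => ?_
      rw [Finset.mem_Icc] at ht
      exact (key k).1 1 t le_rfl ht.1 (by omega) (by omega)
    | succ i hi ih => exact (ih (by omega)).trans (hM i j k hi h)
  intro i j k hi hj hk h hL0
  obtain ⟨j, rfl⟩ : ∃ m, j = m + 1 := ⟨j - 1, by omega⟩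
  obtain ⟨k, rfl⟩ : ∃ m, k = m + 1 := ⟨k - 1, by omega⟩
  rw [hL i (j + 1) (k + 1) hi hk h] at hL0
  simp only [Nat.add_sub_cancel, Finset.sum_Icc_succ_top (Nat.le_add_left 1 j)] at hL0 ⊢
  have h1 := hMnonneg i j k hi (by omega)
  have h2 := hMnonneg i (j + 1) k hi h
  have h3 := (key k).1 i (j + 1) hi hj (by omega) (by omega)
  have h4 := (key (k + 1)).1 i (j + 1) hi hj (by omega) h
  rw [levelDiff_succ] at h2
  unfold levelDiff at h1 h2
  constructor <;> linarith
end

section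
/- For every 1 ≤ i ≤ n and 1 ≤ k ≤ n − i + 1, if the row length ℓ_{i,k} = 0 then the corresponding rigging ρ_{i,k} = 0. -/
/-!
Write `S i j k` for the partial sum `∑ t ≤ j, D i t k`. The second entry of the minimum defining `D`
says that `S i j (k - 1) - S i j k` is weakly increasing in `i`; since it is non-negative for `i = 1`,
it is non-negative for every `i`. The same inequality at `j - 1` shows that the second entry of the
minimum is at least `D i j (k - 1) - D (i - 1) j (k - 1) + D (i - 1) j k`, and from this it follows by
induction on `k` that `D` is non-negative and weakly increasing in `i`.

With `J = n + 2 - i - k`, the row length is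
`l i k = D i J (k - 1) + (S i (J - 1) (k - 1) - S i (J - 1) k)`, a sum of two non-negative terms, so
`l i k = 0` forces `D i J (k - 1) = 0`. Moreover `S i J k ≤ S i J (k - 1)` says `D i J k ≤ l i k`, so
`D i J k = 0` too, and both terms of the rigging vanish.
-/

/-- If the row length `l i k` vanishes then so does the corresponding
rigging `r i k`, for `1 ≤ i ≤ n` and `1 ≤ k ≤ n - i + 1`. -/
theorem stmt_12 (n : ℕ) (hn : 1 ≤ n)
    (x : ℕ → ℕ → ℤ)
    (hx0 : ∀ i j : ℕ, 1 ≤ i → 1 ≤ j → i + j ≤ n + 1 → 0 ≤ x i j)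
    (hxmono : ∀ i j : ℕ, 1 ≤ i → 1 ≤ j → i + 1 + j ≤ n + 1 → x i j ≤ x (i + 1) j)
    (D : ℕ → ℕ → ℕ → ℤ)
    (hD0 : ∀ i j : ℕ, 1 ≤ i → 1 ≤ j → i + j ≤ n + 1 → D i j 0 = x i j)
    (hD1 : ∀ j k : ℕ, 1 ≤ j → 1 ≤ k → 1 + j + k ≤ n + 2 → D 1 j k = 0)
    (hDrec : ∀ i j k : ℕ, 2 ≤ i → 1 ≤ j → 1 ≤ k → i + j + k ≤ n + 2 →
      D i j k = min (D (i - 1) (j + 1) (k - 1))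
        (∑ t ∈ Finset.Icc 1 j, D i t (k - 1)
          - ∑ t ∈ Finset.Icc 1 (j - 1), D i t k
          - ∑ t ∈ Finset.Icc 1 j, D (i - 1) t (k - 1)
          + ∑ t ∈ Finset.Icc 1 j, D (i - 1) t k))
    (l r : ℕ → ℕ → ℤ)
    (hl : ∀ i k : ℕ, 1 ≤ i → i ≤ n → 1 ≤ k → i + k ≤ n + 1 →
      l i k = ∑ j ∈ Finset.Icc 1 (n + 2 - i - k), D i j (k - 1)
        - ∑ j ∈ Finset.Icc 1 (n + 1 - i - k), D i j k)
    (hr : ∀ i k : ℕ, 1 ≤ i → i ≤ n → 1 ≤ k → i + k ≤ n + 1 →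
      r i k = -D i (n + 2 - i - k) (k - 1) + D i (n + 2 - i - k) k) :
    ∀ i k : ℕ, 1 ≤ i → i ≤ n → 1 ≤ k → i + k ≤ n + 1 →
      l i k = 0 → r i k = 0 := by
  obtain ⟨S, hS⟩ : ∃ S : ℕ → ℕ → ℕ → ℤ, ∀ i j k, ∑ t ∈ Finset.Icc 1 j, D i t k = S i j k :=
    ⟨_, fun _ _ _ => rfl⟩
  have hS0 : ∀ i k, S i 0 k = 0 := fun i k => by simp [← hS]
  have hS1 : ∀ i j k, S i (j + 1) k = S i j k + D i (j + 1) k := fun i j k => by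
    rw [← hS, ← hS, Finset.sum_Icc_succ_top (by omega)]
  have hrec : ∀ i j k, 1 ≤ i → i + j + k + 1 ≤ n → D (i + 1) (j + 1) (k + 1) =
      min (D i (j + 2) k) (S (i + 1) (j + 1) k - S (i + 1) j (k + 1) - S i (j + 1) k
        + S i (j + 1) (k + 1)) := fun i j k hi h => by
    have := hDrec (i + 1) (j + 1) (k + 1) (by omega) (by omega) (by omega) (by omega)
    simpa only [hS, Nat.add_sub_cancel] using this
  have hdiff : ∀ i j k, 1 ≤ i → i + j + k ≤ n →
      S i j k - S i j (k + 1) ≤ S (i + 1) j k - S (i + 1) j (k + 1) := fun i j k hi h => by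
    rcases j with _ | j
    · simp [hS0]
    · have h1 := hrec i j k hi (by omega)
      have h2 := min_le_right (D i (j + 2) k) (S (i + 1) (j + 1) k - S (i + 1) j (k + 1)
        - S i (j + 1) k + S i (j + 1) (k + 1))
      have h3 := hS1 (i + 1) j (k + 1)
      linarith
  have hmain : ∀ k,
      (∀ i j, 1 ≤ i → 1 ≤ j → i + j ≤ n + 1 → i + j + k ≤ n + 2 → 0 ≤ D i j k) ∧
      (∀ i j, 1 ≤ i → 1 ≤ j → i + 1 + j ≤ n + 1 → i + 1 + j + k ≤ n + 2 →
        D i j k ≤ D (i + 1) j k) := by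
    intro k
    induction k with
    | zero =>
      refine ⟨fun i j hi hj h _ => ?_, fun i j hi hj h _ => ?_⟩
      · rw [hD0 i j hi hj h]; exact hx0 i j hi hj h
      · rw [hD0 i j hi hj (by omega), hD0 (i + 1) j (by omega) hj h]
        exact hxmono i j hi hj h
    | succ k ih =>
      obtain ⟨ih0, ihm⟩ := ih
      have hm : ∀ i j, 1 ≤ i → i + j + k + 1 ≤ n →
          D i (j + 1) (k + 1) ≤ D (i + 1) (j + 1) (k + 1) := by
        intro i j hi h
        rw [hrec i j k hi h]
        refine le_min ?_ ?_
        · obtain rfl | hi2 := Nat.eq_or_lt_of_le hi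
          · rw [hD1 (j + 1) (k + 1) (by omega) (by omega) (by omega)]
            exact ih0 1 (j + 2) (by omega) (by omega) (by omega) (by omega)
          · obtain ⟨i, rfl⟩ : ∃ m, i = m + 1 := ⟨i - 1, by omega⟩
            rw [hrec i j k (by omega) (by omega)]
            exact (min_le_left _ _).trans
              (ihm i (j + 2) (by omega) (by omega) (by omega) (by omega))
        · have h1 := hdiff i j k hi (by omega)
          have h2 := ihm i (j + 1) hi (by omega) (by omega) (by omega)
          rw [hS1 (i + 1) j k, hS1 i j k, hS1 i j (k + 1)]
          linarith
      refine ⟨fun i j hi hj _ h => ?_, fun i j hi hj _ h => ?_⟩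
      · obtain ⟨j, rfl⟩ : ∃ m, j = m + 1 := ⟨j - 1, by omega⟩
        induction i, hi using Nat.le_induction with
        | base => exact (hD1 (j + 1) (k + 1) (by omega) (by omega) (by omega)).ge
        | succ i hi ihi =>
          exact (ihi (by omega) (by omega)).trans (hm i j hi (by omega))
      · obtain ⟨j, rfl⟩ : ∃ m, j = m + 1 := ⟨j - 1, by omega⟩
        exact hm i j hi (by omega)
  have hdec : ∀ k j i, 1 ≤ i → i + j + k ≤ n + 1 → i + j ≤ n + 1 →
      S i j (k + 1) ≤ S i j k := by
    intro k j i hi h h'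
    induction i, hi using Nat.le_induction with
    | base =>
      rw [← hS, ← hS]
      refine Finset.sum_le_sum fun t ht => ?_
      rw [Finset.mem_Icc] at ht
      rw [hD1 t (k + 1) ht.1 (by omega) (by omega)]
      exact (hmain k).1 1 t le_rfl ht.1 (by omega) (by omega)
    | succ i hi ihi =>
      have h1 := hdiff i j k hi (by omega)
      have h2 := ihi (by omega) (by omega)
      linarith
  intro i k hi hin hk hik hl0
  obtain ⟨k, rfl⟩ : ∃ m, k = m + 1 := ⟨k - 1, by omega⟩
  obtain ⟨j, hj⟩ : ∃ j, n + 1 - i - (k + 1) = j := ⟨_, rfl⟩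
  have hj' : n + 2 - i - (k + 1) = j + 1 := by omega
  rw [hl i (k + 1) hi hin hk hik, hj, hj', Nat.add_sub_cancel, hS, hS, hS1] at hl0
  rw [hr i (k + 1) hi hin hk hik, hj', Nat.add_sub_cancel]
  have h1 := hdec k j i hi (by omega) (by omega)
  have h2 := hdec k (j + 1) i hi (by omega) (by omega)
  have h3 := (hmain k).1 i (j + 1) hi (by omega) (by omega) (by omega)
  have h4 := (hmain (k + 1)).1 i (j + 1) hi (by omega) (by omega) (by omega)
  rw [hS1, hS1] at h2
  linarith
end

section
/- For every 1 ≤ i ≤ n and every k with i < k ≤ n − i + 1, one has ℓ_{i,k} = 0; consequently the i-th rigged partition of the rigged configuration rc_x determined by the data (ℓ_{i,k}, ρ_{i,k}) has height at most min{i, n − i + 1}. -/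
/-!
All entries `D i j k` are non-negative and weakly increasing in `i`. For `k ≥ 1` put
`A i j = ∑_{t ≤ j} D i t (k-1) - ∑_{t ≤ j} D i t k`. The second argument of the minimum defining
`D (i+1) j k` equals
`(A (i+1) (j-1) - A i (j-1)) + (D (i+1) j (k-1) - D i j (k-1)) + D i j k`,
where the first bracket is non-negative because `D (i+1) (j-1) k` is at most the second argument of
its own minimum, and the second by monotonicity at level `k-1`. The first argument
`D i (j+1) (k-1)` is at least `D (i-1) (j+1) (k-1) ≥ D i j k` (or at least `0 = D 1 j k` if
`i = 1`). So monotonicity passes from level `k-1` to level `k`, and non-negativity follows since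
`D 1 j k = 0`.

Then `0 ≤ D (i+1) j k ≤ D i (j+1) (k-1)` gives `D i j k = 0` for all `k ≥ i` by induction on `i`,
and for `k > i` every summand in `l i k` vanishes.
-/

/-- For every `1 ≤ i ≤ n` and every `k` with `i < k ≤ n - i + 1`, the row
length `l i k` vanishes; consequently the `i`-th rigged partition of the
rigged configuration determined by the data `(l, r)` has height at most
`min i (n - i + 1)`. -/
theorem stmt_13 (n : ℕ) (hn : 1 ≤ n)
    (x : ℕ → ℕ → ℤ)
    (hx0 : ∀ i j : ℕ, 1 ≤ i → 1 ≤ j → i + j ≤ n + 1 → 0 ≤ x i j)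
    (hxmono : ∀ i j : ℕ, 1 ≤ i → 1 ≤ j → i + 1 + j ≤ n + 1 → x i j ≤ x (i + 1) j)
    (D : ℕ → ℕ → ℕ → ℤ)
    (hD0 : ∀ i j : ℕ, 1 ≤ i → 1 ≤ j → i + j ≤ n + 1 → D i j 0 = x i j)
    (hD1 : ∀ j k : ℕ, 1 ≤ j → 1 ≤ k → 1 + j + k ≤ n + 2 → D 1 j k = 0)
    (hDrec : ∀ i j k : ℕ, 2 ≤ i → 1 ≤ j → 1 ≤ k → i + j + k ≤ n + 2 →
      D i j k = min (D (i - 1) (j + 1) (k - 1))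
        (∑ t ∈ Finset.Icc 1 j, D i t (k - 1)
          - ∑ t ∈ Finset.Icc 1 (j - 1), D i t k
          - ∑ t ∈ Finset.Icc 1 j, D (i - 1) t (k - 1)
          + ∑ t ∈ Finset.Icc 1 j, D (i - 1) t k))
    (l r : ℕ → ℕ → ℤ)
    (hl : ∀ i k : ℕ, 1 ≤ i → i ≤ n → 1 ≤ k → i + k ≤ n + 1 →
      l i k = ∑ j ∈ Finset.Icc 1 (n + 2 - i - k), D i j (k - 1)
        - ∑ j ∈ Finset.Icc 1 (n + 1 - i - k), D i j k)
    (hr : ∀ i k : ℕ, 1 ≤ i → i ≤ n → 1 ≤ k → i + k ≤ n + 1 →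
      r i k = -D i (n + 2 - i - k) (k - 1) + D i (n + 2 - i - k) k) :
    ∀ i k : ℕ, 1 ≤ i → i ≤ n → i < k → i + k ≤ n + 1 →
      l i k = 0 := by
  -- `D` is weakly increasing in `i` and non-negative, level by level in `k`.
  have key : ∀ k : ℕ,
      (∀ i j : ℕ, 1 ≤ i → 1 ≤ j → i + 1 + j ≤ n + 1 → i + 1 + j + k ≤ n + 2 →
        D i j k ≤ D (i + 1) j k) ∧
      (∀ i j : ℕ, 1 ≤ i → 1 ≤ j → i + j ≤ n + 1 → i + j + k ≤ n + 2 → 0 ≤ D i j k) := by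
    intro k
    induction k with
    | zero =>
      refine ⟨fun i j hi hj h _ => ?_, fun i j hi hj h _ => ?_⟩
      · rw [hD0 i j hi hj (by omega), hD0 (i + 1) j (by omega) hj h]
        exact hxmono i j hi hj h
      · rw [hD0 i j hi hj h]
        exact hx0 i j hi hj h
    | succ k ih =>
      obtain ⟨ihm, ihn⟩ := ih
      have mono : ∀ i j : ℕ, 1 ≤ i → 1 ≤ j → i + 1 + j + (k + 1) ≤ n + 2 →
          D i j (k + 1) ≤ D (i + 1) j (k + 1) := by
        intro i j hi hj h
        obtain ⟨m, rfl⟩ : ∃ m, j = m + 1 := ⟨j - 1, by omega⟩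
        have hrec := hDrec (i + 1) (m + 1) (k + 1) (by omega) hj (by omega) h
        rw [hrec]
        simp only [Nat.add_sub_cancel]
        apply le_min
        · rcases Nat.eq_or_lt_of_le hi with h1 | h1
          · subst h1
            rw [hD1 (m + 1) (k + 1) hj (by omega) (by omega)]
            exact ihn 1 (m + 1 + 1) le_rfl (by omega) (by omega) (by omega)
          · obtain ⟨p, rfl⟩ : ∃ p, i = p + 1 := ⟨i - 1, by omega⟩
            have h2 := hDrec (p + 1) (m + 1) (k + 1) (by omega) hj (by omega) (by omega)
            simp only [Nat.add_sub_cancel] at h2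
            have h3 := ihm p (m + 1 + 1) (by omega) (by omega) (by omega) (by omega)
            exact (h2.le.trans (min_le_left _ _)).trans h3
        · have hlev := ihm i (m + 1) hi hj (by omega) (by omega)
          -- The inequality `A i m ≤ A (i+1) m` of partial sums, empty when `m = 0`.
          have hA : ∑ t ∈ Finset.Icc 1 m, D i t k - ∑ t ∈ Finset.Icc 1 m, D i t (k + 1)
              ≤ ∑ t ∈ Finset.Icc 1 m, D (i + 1) t k
                - ∑ t ∈ Finset.Icc 1 m, D (i + 1) t (k + 1) := by
            rcases Nat.eq_zero_or_pos m with hm | hm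
            · subst hm
              simp
            · obtain ⟨q, rfl⟩ : ∃ q, m = q + 1 := ⟨m - 1, by omega⟩
              have h2 := hDrec (i + 1) (q + 1) (k + 1) (by omega) hm (by omega) (by omega)
              simp only [Nat.add_sub_cancel] at h2
              have h3 := h2.le.trans (min_le_right _ _)
              have h4 := Finset.sum_Icc_succ_top (show 1 ≤ q + 1 by omega)
                (fun t => D (i + 1) t (k + 1))
              linarith
          have e1 := Finset.sum_Icc_succ_top (show 1 ≤ m + 1 by omega) (fun t => D (i + 1) t k)
          have e2 := Finset.sum_Icc_succ_top (show 1 ≤ m + 1 by omega) (fun t => D i t k)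
          have e3 := Finset.sum_Icc_succ_top (show 1 ≤ m + 1 by omega) (fun t => D i t (k + 1))
          linarith
      refine ⟨fun i j hi hj _ h => mono i j hi hj h, ?_⟩
      intro i j hi
      induction i, hi using Nat.le_induction with
      | base =>
        intro hj _ h
        exact (hD1 j (k + 1) hj (by omega) h).ge
      | succ i hi ih =>
        intro hj h1 h2
        exact (ih hj (by omega) (by omega)).trans (mono i j hi hj h2)
  have hzero : ∀ i : ℕ, 1 ≤ i → ∀ j k : ℕ, 1 ≤ j → i ≤ k → i + j + k ≤ n + 2 →
      D i j k = 0 := by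
    intro i hi
    induction i, hi using Nat.le_induction with
    | base => exact fun j k hj hk h => hD1 j k hj hk h
    | succ i hi ih =>
      intro j k hj hk h
      have h1 := hDrec (i + 1) j k (by omega) hj (by omega) h
      have h2 := h1.le.trans (min_le_left _ _)
      rw [Nat.add_sub_cancel, ih (j + 1) (k - 1) (by omega) (by omega) (by omega)] at h2
      exact le_antisymm h2 ((key k).2 (i + 1) j (by omega) hj (by omega) h)
  intro i k hi hin hik h
  rw [hl i k hi hin (by omega) h, Finset.sum_eq_zero, Finset.sum_eq_zero, sub_zero]
  · intro j hj
    rw [Finset.mem_Icc] at hj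
    exact hzero i hi j k hj.1 (by omega) (by omega)
  · intro j hj
    rw [Finset.mem_Icc] at hj
    exact hzero i hi j (k - 1) hj.1 (by omega) (by omega)
end

section
/- For every 1 ≤ i ≤ n, the sequence of row lengths ℓ_{i,1}, ℓ_{i,2}, …, ℓ_{i,n-i+1} is a genuine partition: each ℓ_{i,k} is a non-negative integer and ℓ_{i,k+1} ≤ ℓ_{i,k} for 1 ≤ k ≤ n − i. (Thus the description in Definition 9 of the paper defines a true rigged configuration rc_x.) -/
/-!
Write `S i j k = ∑_{t ≤ j} D i t k` and `F i j k = S i j k - S i j (k + 1)`. The recursion for `D`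
says that `D (i+1) j (k+1) ≤ D i (j+1) k` and `F i j k ≤ F (i+1) j k`, with equality in at least one
of the two. Four facts follow.

* `D` is weakly increasing in `i` (induction on `k`, using the two inequalities), hence `D ≥ 0`,
  since the row `i = 1` is non-negative.
* `F ≥ 0`, since the row `F 1` is non-negative and `F` is weakly increasing in `i`.
* The interlacing `F (i+1) j (k+1) ≤ F i (j+1) k`, by induction on `j` and `i`: whichever of the two
  inequalities defining `D (i+1) j (k+2)` is tight, the bound reduces to a smaller `j` or `i`.
* With `j = n + 1 - i - k`, the row length `l i k` equals `F i j (k-1) + D i (j+1) (k-1)` and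
  `l i (k+1)` equals `F i (j-1) k + D i j k`. The first expression is visibly non-negative, and
  interlacing together with the monotonicity of `F` and `D` in `i` bounds the second by the first.
-/

/-- For every `1 ≤ i ≤ n`, the sequence of row lengths
`l i 1, l i 2, …, l i (n - i + 1)` is a genuine partition: each entry is a
non-negative integer and the entries weakly decrease in `k`. -/
theorem stmt_14 (n : ℕ) (hn : 1 ≤ n)
    (x : ℕ → ℕ → ℤ)
    (hx0 : ∀ i j : ℕ, 1 ≤ i → 1 ≤ j → i + j ≤ n + 1 → 0 ≤ x i j)
    (hxmono : ∀ i j : ℕ, 1 ≤ i → 1 ≤ j → i + 1 + j ≤ n + 1 → x i j ≤ x (i + 1) j)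
    (D : ℕ → ℕ → ℕ → ℤ)
    (hD0 : ∀ i j : ℕ, 1 ≤ i → 1 ≤ j → i + j ≤ n + 1 → D i j 0 = x i j)
    (hD1 : ∀ j k : ℕ, 1 ≤ j → 1 ≤ k → 1 + j + k ≤ n + 2 → D 1 j k = 0)
    (hDrec : ∀ i j k : ℕ, 2 ≤ i → 1 ≤ j → 1 ≤ k → i + j + k ≤ n + 2 →
      D i j k = min (D (i - 1) (j + 1) (k - 1))
        (∑ t ∈ Finset.Icc 1 j, D i t (k - 1)
          - ∑ t ∈ Finset.Icc 1 (j - 1), D i t k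
          - ∑ t ∈ Finset.Icc 1 j, D (i - 1) t (k - 1)
          + ∑ t ∈ Finset.Icc 1 j, D (i - 1) t k))
    (l r : ℕ → ℕ → ℤ)
    (hl : ∀ i k : ℕ, 1 ≤ i → i ≤ n → 1 ≤ k → i + k ≤ n + 1 →
      l i k = ∑ j ∈ Finset.Icc 1 (n + 2 - i - k), D i j (k - 1)
        - ∑ j ∈ Finset.Icc 1 (n + 1 - i - k), D i j k)
    (hr : ∀ i k : ℕ, 1 ≤ i → i ≤ n → 1 ≤ k → i + k ≤ n + 1 →
      r i k = -D i (n + 2 - i - k) (k - 1) + D i (n + 2 - i - k) k) :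
    ∀ i : ℕ, 1 ≤ i → i ≤ n →
      (∀ k : ℕ, 1 ≤ k → i + k ≤ n + 1 → 0 ≤ l i k) ∧
      (∀ k : ℕ, 1 ≤ k → i + (k + 1) ≤ n + 1 → l i (k + 1) ≤ l i k) := by
  obtain ⟨S, hS⟩ : ∃ S : ℕ → ℕ → ℕ → ℤ, ∀ i j k, S i j k = ∑ t ∈ Finset.Icc 1 j, D i t k :=
    ⟨_, fun _ _ _ => rfl⟩
  have S0 : ∀ i k, S i 0 k = 0 := fun i k => by simp [hS]
  have Ssucc : ∀ i j k, S i (j + 1) k = S i j k + D i (j + 1) k := fun i j k => by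
    rw [hS, hS, Finset.sum_Icc_succ_top (by omega)]
  have hrec : ∀ i j k : ℕ, 1 ≤ i → i + j + k + 1 ≤ n →
      D (i + 1) (j + 1) (k + 1) = min (D i (j + 2) k)
        (S (i + 1) (j + 1) k - S (i + 1) j (k + 1) - S i (j + 1) k + S i (j + 1) (k + 1)) := by
    intro i j k hi h
    have := hDrec (i + 1) (j + 1) (k + 1) (by omega) (by omega) (by omega) (by omega)
    simpa only [Nat.add_sub_cancel, ← hS] using this
  have D_le : ∀ i j k : ℕ, 1 ≤ i → i + j + k + 1 ≤ n →
      D (i + 1) (j + 1) (k + 1) ≤ D i (j + 2) k := by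
    intro i j k hi h
    rw [hrec i j k hi h]
    exact min_le_left _ _
  have F_mono : ∀ i j k : ℕ, 1 ≤ i → i + j + k ≤ n →
      S i j k - S i j (k + 1) ≤ S (i + 1) j k - S (i + 1) j (k + 1) := by
    intro i j k hi h
    rcases j with _ | j
    · simp [S0]
    · have h1 := hrec i j k hi (by omega)
      have h2 := min_le_right (D i (j + 2) k)
        (S (i + 1) (j + 1) k - S (i + 1) j (k + 1) - S i (j + 1) k + S i (j + 1) (k + 1))
      have h3 := Ssucc (i + 1) j (k + 1)
      linarith
  have D_mono : ∀ k i j : ℕ, 1 ≤ i → i + j + 1 ≤ n → i + j + k ≤ n →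
      D i (j + 1) k ≤ D (i + 1) (j + 1) k := by
    intro k
    induction k with
    | zero =>
      intro i j hi h _
      rw [hD0 i (j + 1) hi (by omega) (by omega),
        hD0 (i + 1) (j + 1) (by omega) (by omega) (by omega)]
      exact hxmono i (j + 1) hi (by omega) (by omega)
    | succ k ih =>
      intro i j hi _ h
      rw [hrec i j k hi (by omega)]
      apply le_min
      · obtain rfl | ⟨i, rfl, hi1⟩ : i = 1 ∨ ∃ i', i = i' + 1 ∧ 1 ≤ i' := by
          rcases Nat.lt_or_ge 1 i with h' | h'
          · exact Or.inr ⟨i - 1, by omega, by omega⟩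
          · exact Or.inl (by omega)
        · rw [hD1 (j + 1) (k + 1) (by omega) (by omega) (by omega)]
          rcases k with _ | k
          · rw [hD0 1 (j + 2) (by omega) (by omega) (by omega)]
            exact hx0 1 (j + 2) (by omega) (by omega) (by omega)
          · rw [hD1 (j + 2) (k + 1) (by omega) (by omega) (by omega)]
        · exact (D_le i j k hi1 (by omega)).trans (ih i (j + 1) hi1 (by omega) (by omega))
      · have h1 := ih i j hi (by omega) (by omega)
        have h2 := F_mono i j k hi (by omega)
        have h3 := Ssucc i j k
        have h4 := Ssucc i j (k + 1)
        have h5 := Ssucc (i + 1) j k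
        linarith
  have D_nonneg : ∀ i j k : ℕ, i + j + 1 ≤ n → i + j + k ≤ n → 0 ≤ D (i + 1) (j + 1) k := by
    intro i
    induction i with
    | zero =>
      intro j k h h'
      rcases k with _ | k
      · rw [hD0 (0 + 1) (j + 1) (by omega) (by omega) (by omega)]
        exact hx0 _ _ (by omega) (by omega) (by omega)
      · exact (hD1 (j + 1) (k + 1) (by omega) (by omega) (by omega)).ge
    | succ i ih =>
      intro j k h h'
      exact (ih j k (by omega) (by omega)).trans
        (D_mono k (i + 1) j (by omega) (by omega) (by omega))
  have S_one : ∀ k j : ℕ, j + k + 1 ≤ n + 1 → S 1 j (k + 1) = 0 := by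
    intro k j h
    rw [hS]
    apply Finset.sum_eq_zero
    intro t ht
    rw [Finset.mem_Icc] at ht
    exact hD1 t (k + 1) ht.1 (by omega) (by omega)
  have F_nonneg : ∀ i j k : ℕ, i + j + k ≤ n →
      0 ≤ S (i + 1) j k - S (i + 1) j (k + 1) := by
    intro i
    induction i with
    | zero =>
      intro j k h
      rw [Nat.zero_add, S_one k j (by omega), sub_zero, hS]
      apply Finset.sum_nonneg
      intro t ht
      rw [Finset.mem_Icc] at ht
      obtain ⟨t, rfl⟩ : ∃ t', t = t' + 1 := ⟨t - 1, by omega⟩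
      rcases k with _ | k
      · rw [hD0 1 (t + 1) (by omega) (by omega) (by omega)]
        exact hx0 _ _ (by omega) (by omega) (by omega)
      · exact (hD1 (t + 1) (k + 1) (by omega) (by omega) (by omega)).ge
    | succ i ih =>
      intro j k h
      exact (ih j k (by omega)).trans (F_mono (i + 1) j k (by omega) (by omega))
  have F_interlace : ∀ j i k : ℕ, i + j + k + 2 ≤ n →
      S (i + 2) j (k + 1) - S (i + 2) j (k + 2)
        ≤ S (i + 1) (j + 1) k - S (i + 1) (j + 1) (k + 1) := by
    intro j
    induction j with
    | zero =>
      intro i k h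
      rw [S0, S0, sub_zero]
      exact F_nonneg i 1 k (by omega)
    | succ j ihj =>
      intro i
      induction i with
      | zero =>
        intro k h
        rcases min_choice (D 1 (j + 2) (k + 1))
          (S (1 + 1) (j + 1) (k + 1) - S (1 + 1) j (k + 1 + 1) - S 1 (j + 1) (k + 1)
            + S 1 (j + 1) (k + 1 + 1)) with hm | hm
        · have h0 := hrec 1 j (k + 1) (by omega) (by omega)
          rw [hm] at h0
          have h1 := ihj 0 k (by omega)
          have h2 := D_le 1 j k (by omega) (by omega)
          have h3 := Ssucc 2 j (k + 1)
          have h4 := Ssucc 2 j (k + 2)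
          have h5 := Ssucc 1 (j + 1) k
          have h6 := Ssucc 1 (j + 1) (k + 1)
          norm_num at *
          linarith
        · have h0 := hrec 1 j (k + 1) (by omega) (by omega)
          rw [hm] at h0
          have h1 := S_one k (j + 1) (by omega)
          have h2 := S_one (k + 1) (j + 1) (by omega)
          have h4 := Ssucc 2 j (k + 2)
          have h5 := F_nonneg 0 (j + 2) k (by omega)
          norm_num at *
          linarith
      | succ i ihi =>
        intro k h
        have h0 := hrec (i + 2) j (k + 1) (by omega) (by omega)
        rcases min_choice (D (i + 2) (j + 2) (k + 1))
          (S (i + 2 + 1) (j + 1) (k + 1) - S (i + 2 + 1) j (k + 1 + 1) - S (i + 2) (j + 1) (k + 1)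
            + S (i + 2) (j + 1) (k + 1 + 1)) with hm | hm
        · rw [hm] at h0
          have h1 := ihj (i + 1) k (by omega)
          have h2 := D_le (i + 2) j k (by omega) (by omega)
          have h3 := Ssucc (i + 3) j (k + 1)
          have h4 := Ssucc (i + 3) j (k + 2)
          have h5 := Ssucc (i + 2) (j + 1) k
          have h6 := Ssucc (i + 2) (j + 1) (k + 1)
          simp only [Nat.add_assoc, Nat.reduceAdd] at *
          linarith
        · rw [hm] at h0
          have h1 := ihi k (by omega)
          have h2 := F_mono (i + 1) (j + 2) k (by omega) (by omega)
          have h4 := Ssucc (i + 3) j (k + 2)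
          simp only [Nat.add_assoc, Nat.reduceAdd] at *
          linarith
  -- The row lengths, with the last column index `j + 1` of the first sum as a parameter.
  have hl' : ∀ i j k : ℕ, i + j + k + 1 = n →
      l (i + 1) (k + 1) = S (i + 1) (j + 1) k - S (i + 1) j (k + 1) := by
    intro i j k h
    rw [hl (i + 1) (k + 1) (by omega) (by omega) (by omega) (by omega), hS, hS,
      show n + 2 - (i + 1) - (k + 1) = j + 1 by omega,
      show n + 1 - (i + 1) - (k + 1) = j by omega, Nat.add_sub_cancel]
  have l_nonneg : ∀ i k : ℕ, i + k + 1 ≤ n → 0 ≤ l (i + 1) (k + 1) := by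
    intro i k h
    obtain ⟨j, hj⟩ : ∃ j, i + j + k + 1 = n := ⟨n - i - k - 1, by omega⟩
    have h1 := hl' i j k hj
    have h2 := F_nonneg i j k (by omega)
    have h3 := D_nonneg i j k (by omega) (by omega)
    have h4 := Ssucc (i + 1) j k
    linarith
  have l_anti : ∀ i k : ℕ, i + k + 2 ≤ n → l (i + 1) (k + 2) ≤ l (i + 1) (k + 1) := by
    intro i k h
    obtain ⟨j, hj⟩ : ∃ j, i + j + k + 2 = n := ⟨n - i - k - 2, by omega⟩
    rcases i with _ | i
    · -- In the row `i = 1` every length after the first vanishes.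
      have h1 := hl' 0 j (k + 1) (by omega)
      have h2 := S_one k (j + 1) (by omega)
      have h3 := S_one (k + 1) j (by omega)
      have h4 := l_nonneg 0 k (by omega)
      norm_num at *
      linarith
    · have h1 := hl' (i + 1) j (k + 1) (by omega)
      have h2 := hl' (i + 1) (j + 1) k (by omega)
      have h3 := F_interlace j i k (by omega)
      have h4 := F_mono (i + 1) (j + 1) k (by omega) (by omega)
      have h5 := D_le (i + 1) j k (by omega) (by omega)
      have h6 := D_mono k (i + 1) (j + 1) (by omega) (by omega) (by omega)
      have h7 := Ssucc (i + 2) j (k + 1)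
      have h8 := Ssucc (i + 2) (j + 1) k
      simp only [Nat.add_assoc, Nat.reduceAdd] at *
      linarith
  intro i hi hin
  obtain ⟨i, rfl⟩ : ∃ i', i = i' + 1 := ⟨i - 1, by omega⟩
  constructor
  · intro k hk h
    obtain ⟨k, rfl⟩ : ∃ k', k = k' + 1 := ⟨k - 1, by omega⟩
    exact l_nonneg i k (by omega)
  · intro k hk h
    obtain ⟨k, rfl⟩ : ∃ k', k = k' + 1 := ⟨k - 1, by omega⟩
    exact l_anti i k (by omega)
end

section
/- The map x ↦ (ℓ, ρ) is injective on weakly increasing families: if x and x̄ are two families of non-negative integers indexed by pairs (i,j) with 1 ≤ i, 1 ≤ j, i + j ≤ n + 1, both weakly increasing with respect to i, whose extensions D and D̄ (via the stated recursion) produce identical data, i.e. ℓ_{i,k} = ℓ̄_{i,k} and ρ_{i,k} = ρ̄_{i,k} for all 1 ≤ i ≤ n and 1 ≤ k ≤ n − i + 1, then x_{i,j} = x̄_{i,j} for all valid (i,j). (This is the content of the uniqueness assertion of Theorem 1 together with the recovery procedure of Algorithm 2.) -/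
/-!
Put `E i j k = ∑_{t ≤ j} D i t k - ∑_{t < j} D i t (k + 1)`. Cancelling sums turns the defining
recursion into the two local rules

* `D (i+1) j (k+1) = D i (j+1) k + min 0 (E (i+1) j k - E i (j+1) k)`,
* `E i (j+1) k = E i j k - D i j (k+1) + D i (j+1) k`,

together with `E i 1 k = D i 1 k`. The row lengths are exactly the values of `E` on the outermost
layer `i + j + k = n + 1`, and the riggings are the differences `D i j (k+1) - D i j k` there.
Hence on that layer `E` is known, and the first rule combined with the riggings gives `D` by
induction on `i`, starting from `D 1 j (k+1) = 0`. The rules are then run backwards: from `D` and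
`E` on the layer `i + j + k = s + 1`, the second rule gives `E` on the layer `i + j + k = s`, and
then the first rule (for `j ≥ 2`) and `E i 1 k = D i 1 k` give `D` there. The layers cover the
whole index set, so `D`, and in particular `x = D · · 0`, is determined by the data.
-/

/-- The auxiliary quantity `∑_{t ≤ j} D i t k - ∑_{t < j} D i t (k + 1)`, whose value at
`i + j + k = n + 1` is the row length `ℓ i (k + 1)`. -/
def partialLength (D : ℕ → ℕ → ℕ → ℤ) (i j k : ℕ) : ℤ :=
  ∑ t ∈ Finset.Icc 1 j, D i t k - ∑ t ∈ Finset.Icc 1 (j - 1), D i t (k + 1)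

theorem partialLength_one (D : ℕ → ℕ → ℕ → ℤ) (i k : ℕ) : partialLength D i 1 k = D i 1 k := by
  simp [partialLength]

theorem sum_Icc_pred {j : ℕ} (hj : 1 ≤ j) (f : ℕ → ℤ) :
    ∑ t ∈ Finset.Icc 1 j, f t = ∑ t ∈ Finset.Icc 1 (j - 1), f t + f j := by
  obtain ⟨j, rfl⟩ := Nat.exists_eq_add_of_le' hj
  simpa using Finset.sum_Icc_succ_top (a := 1) (b := j) (by omega) f

theorem partialLength_succ (D : ℕ → ℕ → ℕ → ℤ) (i k : ℕ) {j : ℕ} (hj : 1 ≤ j) :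
    partialLength D i (j + 1) k = partialLength D i j k - D i j (k + 1) + D i (j + 1) k := by
  have h1 := sum_Icc_pred (Nat.le_add_left 1 j) (fun t => D i t k)
  have h2 := sum_Icc_pred hj (fun t => D i t (k + 1))
  simp only [partialLength, Nat.add_sub_cancel] at *
  linarith

/-- The defining recursion as a local rule. -/
theorem local_rule (n : ℕ) (D : ℕ → ℕ → ℕ → ℤ)
    (hDrec : ∀ i j k : ℕ, 2 ≤ i → 1 ≤ j → 1 ≤ k → i + j + k ≤ n + 2 →
      D i j k = min (D (i - 1) (j + 1) (k - 1))
        (∑ t ∈ Finset.Icc 1 j, D i t (k - 1)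
          - ∑ t ∈ Finset.Icc 1 (j - 1), D i t k
          - ∑ t ∈ Finset.Icc 1 j, D (i - 1) t (k - 1)
          + ∑ t ∈ Finset.Icc 1 j, D (i - 1) t k))
    (i j k : ℕ) (hi : 1 ≤ i) (hj : 1 ≤ j) (h : i + j + k ≤ n) :
    D (i + 1) j (k + 1) = D i (j + 1) k +
      min 0 (partialLength D (i + 1) j k - partialLength D i (j + 1) k) := by
  have h1 := hDrec (i + 1) j (k + 1) (by omega) hj (by omega) (by omega)
  have h2 := sum_Icc_pred (Nat.le_add_left 1 j) (fun t => D i t k)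
  simp only [Nat.add_sub_cancel] at h1 h2
  rw [h1, ← min_add_add_left]
  simp only [partialLength, Nat.add_sub_cancel]
  congr 1 <;> linarith

/-- The map `x ↦ (l, r)` is injective on weakly increasing families: if two
weakly increasing families of non-negative integers produce, via the stated
recursion, identical row-length and rigging data, then the families agree. -/
theorem stmt_15 (n : ℕ) (hn : 1 ≤ n)
    (x : ℕ → ℕ → ℤ)
    (hx0 : ∀ i j : ℕ, 1 ≤ i → 1 ≤ j → i + j ≤ n + 1 → 0 ≤ x i j)
    (hxmono : ∀ i j : ℕ, 1 ≤ i → 1 ≤ j → i + 1 + j ≤ n + 1 → x i j ≤ x (i + 1) j)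
    (D : ℕ → ℕ → ℕ → ℤ)
    (hD0 : ∀ i j : ℕ, 1 ≤ i → 1 ≤ j → i + j ≤ n + 1 → D i j 0 = x i j)
    (hD1 : ∀ j k : ℕ, 1 ≤ j → 1 ≤ k → 1 + j + k ≤ n + 2 → D 1 j k = 0)
    (hDrec : ∀ i j k : ℕ, 2 ≤ i → 1 ≤ j → 1 ≤ k → i + j + k ≤ n + 2 →
      D i j k = min (D (i - 1) (j + 1) (k - 1))
        (∑ t ∈ Finset.Icc 1 j, D i t (k - 1)
          - ∑ t ∈ Finset.Icc 1 (j - 1), D i t k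
          - ∑ t ∈ Finset.Icc 1 j, D (i - 1) t (k - 1)
          + ∑ t ∈ Finset.Icc 1 j, D (i - 1) t k))
    (l r : ℕ → ℕ → ℤ)
    (hl : ∀ i k : ℕ, 1 ≤ i → i ≤ n → 1 ≤ k → i + k ≤ n + 1 →
      l i k = ∑ j ∈ Finset.Icc 1 (n + 2 - i - k), D i j (k - 1)
        - ∑ j ∈ Finset.Icc 1 (n + 1 - i - k), D i j k)
    (hr : ∀ i k : ℕ, 1 ≤ i → i ≤ n → 1 ≤ k → i + k ≤ n + 1 →
      r i k = -D i (n + 2 - i - k) (k - 1) + D i (n + 2 - i - k) k)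
    (x2 : ℕ → ℕ → ℤ)
    (hx02 : ∀ i j : ℕ, 1 ≤ i → 1 ≤ j → i + j ≤ n + 1 → 0 ≤ x2 i j)
    (hxmono2 : ∀ i j : ℕ, 1 ≤ i → 1 ≤ j → i + 1 + j ≤ n + 1 → x2 i j ≤ x2 (i + 1) j)
    (D2 : ℕ → ℕ → ℕ → ℤ)
    (hD02 : ∀ i j : ℕ, 1 ≤ i → 1 ≤ j → i + j ≤ n + 1 → D2 i j 0 = x2 i j)
    (hD12 : ∀ j k : ℕ, 1 ≤ j → 1 ≤ k → 1 + j + k ≤ n + 2 → D2 1 j k = 0)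
    (hDrec2 : ∀ i j k : ℕ, 2 ≤ i → 1 ≤ j → 1 ≤ k → i + j + k ≤ n + 2 →
      D2 i j k = min (D2 (i - 1) (j + 1) (k - 1))
        (∑ t ∈ Finset.Icc 1 j, D2 i t (k - 1)
          - ∑ t ∈ Finset.Icc 1 (j - 1), D2 i t k
          - ∑ t ∈ Finset.Icc 1 j, D2 (i - 1) t (k - 1)
          + ∑ t ∈ Finset.Icc 1 j, D2 (i - 1) t k))
    (l2 r2 : ℕ → ℕ → ℤ)
    (hl2 : ∀ i k : ℕ, 1 ≤ i → i ≤ n → 1 ≤ k → i + k ≤ n + 1 →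
      l2 i k = ∑ j ∈ Finset.Icc 1 (n + 2 - i - k), D2 i j (k - 1)
        - ∑ j ∈ Finset.Icc 1 (n + 1 - i - k), D2 i j k)
    (hr2 : ∀ i k : ℕ, 1 ≤ i → i ≤ n → 1 ≤ k → i + k ≤ n + 1 →
      r2 i k = -D2 i (n + 2 - i - k) (k - 1) + D2 i (n + 2 - i - k) k)
    (heq : ∀ i k : ℕ, 1 ≤ i → i ≤ n → 1 ≤ k → i + k ≤ n + 1 →
      l i k = l2 i k ∧ r i k = r2 i k) :
    ∀ i j : ℕ, 1 ≤ i → 1 ≤ j → i + j ≤ n + 1 → x i j = x2 i j := by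
  have hrule := local_rule n D hDrec
  have hrule2 := local_rule n D2 hDrec2
  have hEtop : ∀ i j k, 1 ≤ i → 1 ≤ j → i + j + k = n + 1 →
      partialLength D i j k = partialLength D2 i j k := by
    intro i j k hi hj h
    have h1 := hl i (k + 1) hi (by omega) (by omega) (by omega)
    have h2 := hl2 i (k + 1) hi (by omega) (by omega) (by omega)
    have h3 := (heq i (k + 1) hi (by omega) (by omega) (by omega)).1
    rw [show n + 2 - i - (k + 1) = j by omega, show n + 1 - i - (k + 1) = j - 1 by omega,
      Nat.add_sub_cancel] at h1 h2
    rw [partialLength, partialLength, ← h1, ← h2, h3]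
  -- By the equality of the riggings, `D i j k` is determined by `D i j (k + 1)`.
  have hrig : ∀ i j k, 1 ≤ i → 1 ≤ j → i + j + k = n + 1 → D i j (k + 1) = D2 i j (k + 1) →
      D i j k = D2 i j k := by
    intro i j k hi hj h hk
    have h1 := hr i (k + 1) hi (by omega) (by omega) (by omega)
    have h2 := hr2 i (k + 1) hi (by omega) (by omega) (by omega)
    have h3 := (heq i (k + 1) hi (by omega) (by omega) (by omega)).2
    rw [show n + 2 - i - (k + 1) = j by omega, Nat.add_sub_cancel] at h1 h2
    linarith
  have hDtop : ∀ i, 1 ≤ i → ∀ j k, 1 ≤ j → i + j + k = n + 1 → D i j k = D2 i j k := by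
    intro i hi
    induction i, hi using Nat.le_induction with
    | base =>
      intro j k hj h
      apply hrig _ j k (by omega) hj h
      rw [hD1 j (k + 1) hj (by omega) (by omega), hD12 j (k + 1) hj (by omega) (by omega)]
    | succ i hi ih =>
      intro j k hj h
      apply hrig _ j k (by omega) hj h
      rw [hrule i j k hi hj (by omega), hrule2 i j k hi hj (by omega),
        hEtop (i + 1) j k (by omega) hj h, hEtop i (j + 1) k hi (by omega) (by omega),
        ih (j + 1) k (by omega) (by omega)]
  -- Descent through the layers; `m` is the distance to the outermost one.
  have hall : ∀ m i j k, 1 ≤ i → 1 ≤ j → i + j + k + m = n + 1 →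
      partialLength D i j k = partialLength D2 i j k ∧ D i j k = D2 i j k := by
    intro m
    induction m with
    | zero => exact fun i j k hi hj h => ⟨hEtop i j k hi hj h, hDtop i hi j k hj h⟩
    | succ m ih =>
      have hE : ∀ i j k, 1 ≤ i → 1 ≤ j → i + j + k + (m + 1) = n + 1 →
          partialLength D i j k = partialLength D2 i j k := by
        intro i j k hi hj h
        have h1 := partialLength_succ D i k hj
        have h2 := partialLength_succ D2 i k hj
        have h3 := ih i (j + 1) k hi (by omega) (by omega)
        have h4 := (ih i j (k + 1) hi hj (by omega)).2
        linarith [h3.1, h3.2]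
      intro i j k hi hj h
      refine ⟨hE i j k hi hj h, ?_⟩
      obtain rfl | hj2 := Nat.eq_or_lt_of_le hj
      · rw [← partialLength_one D, ← partialLength_one D2]
        exact hE i 1 k hi hj h
      · obtain ⟨j, rfl⟩ := Nat.exists_eq_add_of_le' hj
        have h1 := hrule i j k hi (by omega) (by omega)
        have h2 := hrule2 i j k hi (by omega) (by omega)
        rw [hE (i + 1) j k (by omega) (by omega) (by omega), hE i (j + 1) k hi hj h,
          (ih (i + 1) j (k + 1) (by omega) (by omega) (by omega)).2] at h1
        linarith
  intro i j hi hj h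
  rw [← hD0 i j hi hj h, ← hD02 i j hi hj h]
  exact (hall (n + 1 - (i + j)) i j 0 hi hj (by omega)).2
end

section
/- In the recursion defining D, when the maximal row length of the first rigged partition vanishes, so do all riggings there; more precisely, for every valid (i,j,k) with k ≥ 1, if the partial sum Σ_{t=1}^{j} D_{i,t,k-1} = 0 then D_{i',t,k-1} = 0 for all i' ≤ i and 1 ≤ t ≤ j. -/
/-!
The recursion preserves entrywise monotonicity in `i`: if `D i j (k-1) ≤ D (i+1) j (k-1)`
throughout level `k - 1`, the same holds at level `k`. Indeed `D (i+1) j k` is a minimum of two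
terms. The first one, `D i (j+1) (k-1)`, dominates `D (i-1) (j+1) (k-1) ≥ D i j k` by monotonicity
one level down. For the second one, the recursion at `j - 1` bounds the partial sum
`∑_{t<j} D (i+1) t k` from above, and substituting this bound telescopes the second term to at
least `D i j k + (D (i+1) j (k-1) - D i j (k-1)) ≥ D i j k`.

As the row `i = 1` is nonnegative, all entries are nonnegative. So a vanishing partial sum forces
each of its terms to vanish, and monotonicity squeezes the entries with smaller `i` between `0`
and `0`.
-/

/-- If a partial sum `∑_{t=1}^{j} D i t (k-1)` vanishes, then all the entries
`D i' t (k-1)` with `i' ≤ i` and `1 ≤ t ≤ j` vanish. -/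
theorem stmt_16 (n : ℕ) (hn : 1 ≤ n)
    (x : ℕ → ℕ → ℤ)
    (hx0 : ∀ i j : ℕ, 1 ≤ i → 1 ≤ j → i + j ≤ n + 1 → 0 ≤ x i j)
    (hxmono : ∀ i j : ℕ, 1 ≤ i → 1 ≤ j → i + 1 + j ≤ n + 1 → x i j ≤ x (i + 1) j)
    (D : ℕ → ℕ → ℕ → ℤ)
    (hD0 : ∀ i j : ℕ, 1 ≤ i → 1 ≤ j → i + j ≤ n + 1 → D i j 0 = x i j)
    (hD1 : ∀ j k : ℕ, 1 ≤ j → 1 ≤ k → 1 + j + k ≤ n + 2 → D 1 j k = 0)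
    (hDrec : ∀ i j k : ℕ, 2 ≤ i → 1 ≤ j → 1 ≤ k → i + j + k ≤ n + 2 →
      D i j k = min (D (i - 1) (j + 1) (k - 1))
        (∑ t ∈ Finset.Icc 1 j, D i t (k - 1)
          - ∑ t ∈ Finset.Icc 1 (j - 1), D i t k
          - ∑ t ∈ Finset.Icc 1 j, D (i - 1) t (k - 1)
          + ∑ t ∈ Finset.Icc 1 j, D (i - 1) t k)) :
    ∀ i j k : ℕ, 1 ≤ i → 1 ≤ j → 1 ≤ k → i + j + k ≤ n + 2 →
      (∑ t ∈ Finset.Icc 1 j, D i t (k - 1)) = 0 →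
      ∀ i' t : ℕ, 1 ≤ i' → i' ≤ i → 1 ≤ t → t ≤ j → D i' t (k - 1) = 0 := by
  -- Bound on partial sums that the second argument of the `min` provides; also valid for `j = 0`.
  have partial_sum_le : ∀ i j k : ℕ, 1 ≤ i → i + 1 + j + (k + 1) ≤ n + 2 →
      ∑ t ∈ Finset.Icc 1 j, D (i + 1) t (k + 1) ≤
        ∑ t ∈ Finset.Icc 1 j, D (i + 1) t k - ∑ t ∈ Finset.Icc 1 j, D i t k
          + ∑ t ∈ Finset.Icc 1 j, D i t (k + 1) := by
    intro i j k hi h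
    rcases j with _ | j
    · simp
    · have hr := hDrec (i + 1) (j + 1) (k + 1) (by omega) (by omega) (by omega) (by omega)
      simp only [Nat.add_sub_cancel] at hr
      have hle := hr.le.trans (min_le_right _ _)
      rw [Finset.sum_Icc_succ_top (f := fun t => D (i + 1) t (k + 1)) (by omega)]
      linarith
  have first_row_nonneg : ∀ j k : ℕ, 1 ≤ j → 1 + j + k ≤ n + 1 → 0 ≤ D 1 j k := by
    intro j k hj h
    rcases k with _ | k
    · rw [hD0 1 j le_rfl hj (by omega)]
      exact hx0 1 j le_rfl hj (by omega)
    · exact (hD1 j (k + 1) hj (by omega) (by omega)).ge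
  have step_le : ∀ k i j : ℕ, 1 ≤ i → 1 ≤ j → i + 1 + j + k ≤ n + 1 →
      D i j k ≤ D (i + 1) j k := by
    intro k
    induction k with
    | zero =>
      intro i j hi hj h
      rw [hD0 i j hi hj (by omega), hD0 (i + 1) j (by omega) hj (by omega)]
      exact hxmono i j hi hj (by omega)
    | succ k ih =>
      intro i j hi hj h
      obtain ⟨j, rfl⟩ : ∃ m, j = m + 1 := ⟨j - 1, by omega⟩
      have hr := hDrec (i + 1) (j + 1) (k + 1) (by omega) (by omega) (by omega) (by omega)
      simp only [Nat.add_sub_cancel] at hr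
      rw [hr]
      apply le_min
      · rcases Nat.eq_or_lt_of_le hi with rfl | hi2
        · rw [hD1 (j + 1) (k + 1) (by omega) (by omega) (by omega)]
          exact first_row_nonneg _ _ (by omega) (by omega)
        · obtain ⟨i, rfl⟩ : ∃ m, i = m + 1 := ⟨i - 1, by omega⟩
          have hr' := hDrec (i + 1) (j + 1) (k + 1) (by omega) (by omega) (by omega) (by omega)
          simp only [Nat.add_sub_cancel] at hr'
          exact (hr'.le.trans (min_le_left _ _)).trans
            (ih i (j + 1 + 1) (by omega) (by omega) (by omega))
      · have hS := partial_sum_le i j k hi (by omega)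
        have hm := ih i (j + 1) hi (by omega) (by omega)
        simp only [Finset.sum_Icc_succ_top (show 1 ≤ j + 1 by omega)]
        linarith
  have mono : ∀ i i' j k : ℕ, 1 ≤ i' → i' ≤ i → 1 ≤ j → i + j + k ≤ n + 1 →
      D i' j k ≤ D i j k := by
    intro i i' j k hi' hle hj
    induction i, hle using Nat.le_induction with
    | base => intro _; exact le_rfl
    | succ m hm ih =>
      intro h
      exact (ih (by omega)).trans (step_le k m j (by omega) hj (by omega))
  have nonneg : ∀ i j k : ℕ, 1 ≤ i → 1 ≤ j → i + j + k ≤ n + 1 → 0 ≤ D i j k := by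
    intro i j k hi hj h
    exact (first_row_nonneg j k hj (by omega)).trans (mono i 1 j k le_rfl hi hj h)
  intro i j k hi hj hk h hsum i' t hi' hle ht htj
  have hzero : D i t (k - 1) = 0 := by
    refine (Finset.sum_eq_zero_iff_of_nonneg ?_).mp hsum t (Finset.mem_Icc.mpr ⟨ht, htj⟩)
    intro s hs
    rw [Finset.mem_Icc] at hs
    exact nonneg i s (k - 1) hi hs.1 (by omega)
  exact le_antisymm (hzero ▸ mono i i' t (k - 1) hi' hle ht (by omega))
    (nonneg i' t (k - 1) hi' ht (by omega))
end

section
/- For every 1 ≤ i ≤ n and 1 ≤ k ≤ i, if the row length ℓ'_{i,k} = 0 then the corresponding rigging ρ'_{i,k} = 0. -/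
/-!
Fix a level `k ≥ 1`, write `x = E _ _ (k-1)`, `z = E _ _ k`, and let
`D i j = ∑_{t ≤ j} (x i t - z i t)`. The recursion says exactly that
`D i j = max (D i (j-1) + x i j - x (i+1) (j+1)) (D (i+1) j)`, so `D` is weakly decreasing in `i`,
and since `z` vanishes in row `n` and `x` is non-negative there, `D ≥ 0`.

Non-negativity and monotonicity in `i` propagate from `x` to `z`. The heart is the inequality
`D (i+1) j ≤ D i (j-1) + x i j`, proved by descending induction on `i`: it is what `z i j ≥ 0`
means for the second argument of the minimum. The facts about one level are in `level_step`,
and iterating it gives `level_all`.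

With `m = i+1-k`, one has `l' i k = D i (m-1) + x i m` and `r' i k = D i (m-1) - D i m`. If
`l' i k = 0`, both non-negative summands vanish, and
`0 ≤ D i m = D i (m-1) + x i m - z i m ≤ 0`, whence `r' i k = 0`.
-/

/-- The passage from the level `x` of index `k - 1` to the level `z` of index `k`: if `x` is
non-negative and weakly decreasing in its first index, then so is `z`, and the partial row sums
of `z` are bounded by those of `x`. The domain of `x` is `j ≤ i`, `j + k ≤ i + 2`
(the first condition matters only for `k = 1`), that of `z` is `j + k ≤ i + 1`. -/
lemma level_step (n k : ℕ) (hk : 1 ≤ k) (x z : ℕ → ℕ → ℤ)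
    (hx0 : ∀ i j : ℕ, 1 ≤ j → j ≤ i → j + k ≤ i + 2 → i ≤ n → 0 ≤ x i j)
    (hxm : ∀ i j : ℕ, 1 ≤ j → j ≤ i → j + k ≤ i + 2 → i + 1 ≤ n → x (i + 1) j ≤ x i j)
    (hzn : ∀ j : ℕ, 1 ≤ j → j + k ≤ n + 1 → z n j = 0)
    (hrec : ∀ i j : ℕ, 1 ≤ j → j + k ≤ i + 1 → i + 1 ≤ n →
      z i j = min (x (i + 1) (j + 1))
        (∑ t ∈ Finset.Icc 1 j, x i t - ∑ t ∈ Finset.Icc 1 j, x (i + 1) t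
          - ∑ t ∈ Finset.Icc 1 (j - 1), z i t + ∑ t ∈ Finset.Icc 1 j, z (i + 1) t)) :
    (∀ i j : ℕ, 1 ≤ j → j + k ≤ i + 1 → i ≤ n → 0 ≤ z i j) ∧
    (∀ i j : ℕ, 1 ≤ j → j + k ≤ i + 1 → i + 1 ≤ n → z (i + 1) j ≤ z i j) ∧
    (∀ i j : ℕ, j + k ≤ i + 1 → i ≤ n →
      ∑ t ∈ Finset.Icc 1 j, z i t ≤ ∑ t ∈ Finset.Icc 1 j, x i t) := by
  obtain ⟨X, hX⟩ : ∃ X : ℕ → ℕ → ℤ, ∀ i j, ∑ t ∈ Finset.Icc 1 j, x i t = X i j :=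
    ⟨_, fun _ _ => rfl⟩
  obtain ⟨Z, hZ⟩ : ∃ Z : ℕ → ℕ → ℤ, ∀ i j, ∑ t ∈ Finset.Icc 1 j, z i t = Z i j :=
    ⟨_, fun _ _ => rfl⟩
  have X0 : ∀ i, X i 0 = 0 := fun i => by simp [← hX]
  have Z0 : ∀ i, Z i 0 = 0 := fun i => by simp [← hZ]
  have XS : ∀ i j, X i (j + 1) = X i j + x i (j + 1) := fun i j => by
    rw [← hX, ← hX, Finset.sum_Icc_succ_top (by omega)]
  have ZS : ∀ i j, Z i (j + 1) = Z i j + z i (j + 1) := fun i j => by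
    rw [← hZ, ← hZ, Finset.sum_Icc_succ_top (by omega)]
  simp only [hX, hZ] at hrec ⊢
  have hrec' : ∀ i j : ℕ, j + 1 + k ≤ i + 1 → i + 1 ≤ n →
      z i (j + 1) = min (x (i + 1) (j + 2))
        (X i (j + 1) - X (i + 1) (j + 1) - Z i j + Z (i + 1) (j + 1)) :=
    fun i j h1 h2 => by simpa using hrec i (j + 1) (by omega) h1 h2
  have Dmono : ∀ i j : ℕ, j + k ≤ i + 1 → i + 1 ≤ n →
      X (i + 1) j - Z (i + 1) j ≤ X i j - Z i j := by
    intro i j h1 h2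
    rcases j with _ | j
    · simp [X0, Z0]
    · have h := hrec' i j h1 h2
      have h3 := min_le_right (x (i + 1) (j + 2))
        (X i (j + 1) - X (i + 1) (j + 1) - Z i j + Z (i + 1) (j + 1))
      have := ZS i j
      omega
  have key : ∀ d i j : ℕ, i + 1 + d = n → j + 1 + k ≤ i + 1 →
      X (i + 1) (j + 1) - Z (i + 1) (j + 1) ≤ X i j - Z i j + x i (j + 1) := by
    intro d
    induction d with
    | zero =>
      intro i j h1 h2
      obtain rfl : n = i + 1 := by omega
      have h3 := hzn (j + 1) (by omega) (by omega)
      have h4 := Dmono i j (by omega) le_rfl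
      have h5 := hxm i (j + 1) (by omega) (by omega) (by omega) le_rfl
      rw [XS, ZS, h3]
      omega
    | succ d ih =>
      intro i j h1 h2
      have h3 := hrec' (i + 1) j (by omega) (by omega)
      have h4 := Dmono i j (by omega) (by omega)
      have h5 := hxm i (j + 1) (by omega) (by omega) (by omega) (by omega)
      have h6 := hx0 (i + 2) (j + 2) (by omega) (by omega) (by omega) (by omega)
      have h7 := ih (i + 1) j (by omega) (by omega)
      have h8 := XS (i + 1) j
      have h9 := ZS (i + 1) j
      have e : i + 1 + 1 = i + 2 := rfl
      rw [e] at h3 h7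
      -- The two cases are the two arguments of the minimum defining `z (i + 1) (j + 1)`.
      rcases min_choice (x (i + 2) (j + 2))
        (X (i + 1) (j + 1) - X (i + 2) (j + 1) - Z (i + 1) j + Z (i + 2) (j + 1)) with h | h
      · rw [h] at h3; omega
      · rw [h] at h3; omega
  have nonneg : ∀ i j : ℕ, 1 ≤ j → j + k ≤ i + 1 → i ≤ n → 0 ≤ z i j := by
    intro i j hj h1 h2
    rcases j with _ | j
    · omega
    rcases h2.eq_or_lt with rfl | h2
    · rw [hzn _ hj h1]
    · rw [hrec' i j h1 h2]
      have h3 := key (n - (i + 1)) i j (by omega) h1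
      have h4 := XS i j
      exact le_min (hx0 _ _ (by omega) (by omega) (by omega) h2) (by omega)
  refine ⟨nonneg, ?_, ?_⟩
  · intro i j hj h1 h2
    rcases j with _ | j
    · omega
    rcases h2.eq_or_lt with h3 | h3
    · have h4 := nonneg i (j + 1) hj h1 (by omega)
      rw [h3, hzn _ hj (by omega)]
      exact h4
    · rw [hrec' i j h1 h2]
      have h4 := XS i j
      have h5 := XS (i + 1) j
      have h6 := ZS (i + 1) j
      have h7 := Dmono i j (by omega) h2
      have h8 := hxm i (j + 1) hj (by omega) (by omega) h2
      refine le_min ?_ (by omega)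
      rw [hrec' (i + 1) j (by omega) h3]
      exact (min_le_left _ _).trans (hxm (i + 1) (j + 2) (by omega) (by omega) (by omega) h3)
  · have main : ∀ d i j : ℕ, i + d = n → j + k ≤ i + 1 → Z i j ≤ X i j := by
      intro d
      induction d with
      | zero =>
        intro i j h1 h2
        obtain rfl : i = n := by omega
        rw [← hX, ← hZ]
        refine Finset.sum_le_sum fun t ht => ?_
        rw [Finset.mem_Icc] at ht
        rw [hzn t ht.1 (by omega)]
        exact hx0 i t ht.1 (by omega) (by omega) le_rfl
      | succ d ih =>
        intro i j h1 h2
        have h3 := ih (i + 1) j (by omega) (by omega)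
        have h4 := Dmono i j h2 (by omega)
        omega
    exact fun i j h1 h2 => main (n - i) i j (by omega) h1

/-- Every level of the extension is non-negative and weakly decreasing in its first index. -/
lemma level_all (n : ℕ) (E : ℕ → ℕ → ℕ → ℤ)
    (h0 : ∀ i j : ℕ, 1 ≤ j → j ≤ i → i ≤ n → 0 ≤ E i j 0)
    (hmono : ∀ i j : ℕ, 1 ≤ j → j ≤ i → i + 1 ≤ n → E (i + 1) j 0 ≤ E i j 0)
    (hEn : ∀ j k : ℕ, 1 ≤ j → 1 ≤ k → j + k ≤ n + 1 → E n j k = 0)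
    (hErec : ∀ i j k : ℕ, 1 ≤ j → 1 ≤ k → j + k ≤ i + 1 → i + 1 ≤ n →
      E i j k = min (E (i + 1) (j + 1) (k - 1))
        (∑ t ∈ Finset.Icc 1 j, E i t (k - 1)
          - ∑ t ∈ Finset.Icc 1 j, E (i + 1) t (k - 1)
          - ∑ t ∈ Finset.Icc 1 (j - 1), E i t k
          + ∑ t ∈ Finset.Icc 1 j, E (i + 1) t k)) (k : ℕ) :
    (∀ i j : ℕ, 1 ≤ j → j ≤ i → j + k ≤ i + 1 → i ≤ n → 0 ≤ E i j k) ∧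
    (∀ i j : ℕ, 1 ≤ j → j ≤ i → j + k ≤ i + 1 → i + 1 ≤ n → E (i + 1) j k ≤ E i j k) := by
  induction k with
  | zero => exact ⟨fun i j a b _ c => h0 i j a b c, fun i j a b _ c => hmono i j a b c⟩
  | succ k ih =>
    obtain ⟨h1, h2, -⟩ := level_step n (k + 1) (by omega) (fun i j => E i j k)
      (fun i j => E i j (k + 1))
      (fun i j a b c d => ih.1 i j a b (by omega) d)
      (fun i j a b c d => ih.2 i j a b (by omega) d)
      (fun j a b => hEn j (k + 1) a (by omega) b)
      (fun i j a b c => by simpa using hErec i j (k + 1) a (by omega) b c)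
    exact ⟨fun i j a _ b c => h1 i j a b c, fun i j a _ b c => h2 i j a b c⟩

/-- Reverse-tableau version: if the row length `l' i k` vanishes then so does
the corresponding rigging `r' i k`, for `1 ≤ k ≤ i ≤ n`. -/
theorem stmt_17 (n : ℕ) (hn : 1 ≤ n)
    (y : ℕ → ℕ → ℤ)
    (hy0 : ∀ i j : ℕ, 1 ≤ j → j ≤ i → i ≤ n → 0 ≤ y i j)
    (hymono : ∀ i j : ℕ, 1 ≤ j → j ≤ i → i + 1 ≤ n → y (i + 1) j ≤ y i j)
    (E : ℕ → ℕ → ℕ → ℤ)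
    (hE0 : ∀ i j : ℕ, 1 ≤ j → j ≤ i → i ≤ n → E i j 0 = y i j)
    (hEn : ∀ j k : ℕ, 1 ≤ j → 1 ≤ k → j + k ≤ n + 1 → E n j k = 0)
    (hErec : ∀ i j k : ℕ, 1 ≤ j → 1 ≤ k → j + k ≤ i + 1 → i + 1 ≤ n →
      E i j k = min (E (i + 1) (j + 1) (k - 1))
        (∑ t ∈ Finset.Icc 1 j, E i t (k - 1)
          - ∑ t ∈ Finset.Icc 1 j, E (i + 1) t (k - 1)
          - ∑ t ∈ Finset.Icc 1 (j - 1), E i t k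
          + ∑ t ∈ Finset.Icc 1 j, E (i + 1) t k))
    (l' r' : ℕ → ℕ → ℤ)
    (hl' : ∀ i k : ℕ, 1 ≤ k → k ≤ i → i ≤ n →
      l' i k = ∑ j ∈ Finset.Icc 1 (i + 1 - k), E i j (k - 1)
        - ∑ j ∈ Finset.Icc 1 (i - k), E i j k)
    (hr' : ∀ i k : ℕ, 1 ≤ k → k ≤ i → i ≤ n →
      r' i k = -E i (i + 1 - k) (k - 1) + E i (i + 1 - k) k) :
    ∀ i k : ℕ, 1 ≤ k → k ≤ i → i ≤ n →
      l' i k = 0 → r' i k = 0 := by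
  intro i k hk hki hin hl
  have h0 : ∀ i j : ℕ, 1 ≤ j → j ≤ i → i ≤ n → 0 ≤ E i j 0 := fun i j a b c => by
    rw [hE0 i j a b c]
    exact hy0 i j a b c
  have hm : ∀ i j : ℕ, 1 ≤ j → j ≤ i → i + 1 ≤ n → E (i + 1) j 0 ≤ E i j 0 :=
    fun i j a b c => by
      rw [hE0 i j a b (by omega), hE0 (i + 1) j a (by omega) c]
      exact hymono i j a b c
  have ih := level_all n E h0 hm hEn hErec (k - 1)
  obtain ⟨hz, -, hdom⟩ := level_step n k hk (fun i j => E i j (k - 1)) (fun i j => E i j k)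
    (fun i j a b c d => ih.1 i j a b (by omega) d)
    (fun i j a b c d => ih.2 i j a b (by omega) d)
    (fun j a b => hEn j k a hk b)
    (fun i j a b c => hErec i j k a hk b c)
  rw [hl' i k hk hki hin] at hl
  rw [hr' i k hk hki hin]
  obtain ⟨m, hm1⟩ : ∃ m, m = i - k := ⟨_, rfl⟩
  have hm2 : i + 1 - k = m + 1 := by omega
  rw [hm2, ← hm1, Finset.sum_Icc_succ_top (by omega)] at hl
  rw [hm2]
  have a1 := hdom i m (by omega) hin
  have a2 := hdom i (m + 1) (by omega) hin
  rw [Finset.sum_Icc_succ_top (by omega), Finset.sum_Icc_succ_top (by omega)] at a2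
  have a3 := hz i (m + 1) (by omega) (by omega) hin
  have a4 := ih.1 i (m + 1) (by omega) (by omega) (by omega) hin
  omega
end

section
/- The map y ↦ (ℓ', ρ') is injective on weakly decreasing families: if y and ȳ are two families of non-negative integers indexed by pairs (i,j) with 1 ≤ j ≤ n and j ≤ i ≤ n, both weakly decreasing with respect to i, whose extensions E and Ē (via the stated recursion) produce identical data, i.e. ℓ'_{i,k} = ℓ̄'_{i,k} and ρ'_{i,k} = ρ̄'_{i,k} for all 1 ≤ i ≤ n and 1 ≤ k ≤ i, then y_{i,j} = ȳ_{i,j} for all valid (i,j). (This is the content of the uniqueness assertion of Theorem 4 together with the recovery procedure of Algorithm 4.) -/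
/-!
Write `D i j k = ∑_{t ≤ j} (E i t (k-1) - E i t k)` and `L i j k = D i j k + E i j k`. Then
`L i (j+1) k = D i j k + E i (j+1) (k-1)` by definition, and the min-recursion for `E` becomes the
symmetric relation (`carryD_rec`)

  `E i j k + D (i+1) j k = min (L i j k) (L (i+1) (j+1) k)`.

On the boundary `j + k = i + 1` one has `L i j k = ℓ' i k` and `E i j k = ρ' i k + E i j (k-1)`, so
descending induction on `i`, starting from `E n j k = 0`, recovers the boundary values of `E` and
`D` from `(ℓ', ρ')` (`boundary_eq`). Moreover the relation above, read as a formula for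
`D (i+1) j k`, determines `D` and then `E` on the diagonal `i + 1 = j + k + (c+1)` from their values
on the diagonal `i + 1 = j + k + c` (`diagonal_step`). By induction on `c`, all of `E` is recovered,
in particular `E i j 0 = y i j`.
-/

/-- The difference `∑_{t=1}^{j} E i t (k-1) - ∑_{t=1}^{j} E i t k` of partial row sums of
consecutive layers; meaningful for `k ≥ 1`. -/
def carryD (E : ℕ → ℕ → ℕ → ℤ) (i j k : ℕ) : ℤ :=
  ∑ t ∈ Finset.Icc 1 j, E i t (k - 1) - ∑ t ∈ Finset.Icc 1 j, E i t k

/-- The quantity `L`: for `j ≥ 1` it is the layer difference `carryD` with the last term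
`E i j k` of the second sum left out. It extends `ℓ'`, which is its value at `j = i + 1 - k`. -/
def carryL (E : ℕ → ℕ → ℕ → ℤ) (i j k : ℕ) : ℤ := carryD E i j k + E i j k

lemma carryD_zero (E : ℕ → ℕ → ℕ → ℤ) (i k : ℕ) : carryD E i 0 k = 0 := by
  simp [carryD]

lemma carryL_succ (E : ℕ → ℕ → ℕ → ℤ) (i j k : ℕ) :
    carryL E i (j + 1) k = carryD E i j k + E i (j + 1) (k - 1) := by
  unfold carryL carryD
  rw [Finset.sum_Icc_succ_top (by omega), Finset.sum_Icc_succ_top (by omega)]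
  ring

/-- The min-recursion, for indices at which it is assumed, in symmetric form. -/
lemma carryD_rec (E : ℕ → ℕ → ℕ → ℤ) (i j k : ℕ) (hj : 1 ≤ j)
    (h : E i j k = min (E (i + 1) (j + 1) (k - 1))
        (∑ t ∈ Finset.Icc 1 j, E i t (k - 1)
          - ∑ t ∈ Finset.Icc 1 j, E (i + 1) t (k - 1)
          - ∑ t ∈ Finset.Icc 1 (j - 1), E i t k
          + ∑ t ∈ Finset.Icc 1 j, E (i + 1) t k)) :
    E i j k + carryD E (i + 1) j k = min (carryL E i j k) (carryL E (i + 1) (j + 1) k) := by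
  obtain ⟨j, rfl⟩ : ∃ m, j = m + 1 := ⟨j - 1, by omega⟩
  rw [carryL_succ E (i + 1)]
  -- the second argument of the minimum is `L i j k - D (i+1) j k`
  have h2 : ∑ t ∈ Finset.Icc 1 (j + 1), E i t (k - 1)
          - ∑ t ∈ Finset.Icc 1 (j + 1), E (i + 1) t (k - 1)
          - ∑ t ∈ Finset.Icc 1 (j + 1 - 1), E i t k
          + ∑ t ∈ Finset.Icc 1 (j + 1), E (i + 1) t k
      = carryL E i (j + 1) k - carryD E (i + 1) (j + 1) k := by
    have h3 : ∑ t ∈ Finset.Icc 1 (j + 1), E i t k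
        = ∑ t ∈ Finset.Icc 1 j, E i t k + E i (j + 1) k :=
      Finset.sum_Icc_succ_top (by omega) _
    simp only [carryL, carryD, Nat.add_sub_cancel]
    rw [h3]
    ring
  rw [h2] at h
  omega

/-- The symmetric relation, for all indices in the range of the recursion. -/
def SymmRec (n : ℕ) (E : ℕ → ℕ → ℕ → ℤ) : Prop :=
  ∀ i j k : ℕ, 1 ≤ j → 1 ≤ k → j + k ≤ i + 1 → i + 1 ≤ n →
    E i j k + carryD E (i + 1) j k = min (carryL E i j k) (carryL E (i + 1) (j + 1) k)

/-- Agreement of two arrays, and of their layer differences, on the diagonal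
`i + 1 = j + k + c`. -/
def AgreeOn (n c : ℕ) (E F : ℕ → ℕ → ℕ → ℤ) : Prop :=
  ∀ i j k : ℕ, 1 ≤ j → 1 ≤ k → i ≤ n → i + 1 = j + k + c →
    E i j k = F i j k ∧ carryD E i j k = carryD F i j k

/-- Agreement on one diagonal forces agreement on the next, including `j = 0` for the layer
differences and the bottom layer `k - 1 = 0` for the arrays. -/
lemma diagonal_step {n c : ℕ} {E F : ℕ → ℕ → ℕ → ℤ} (hE : SymmRec n E) (hF : SymmRec n F)
    (h : AgreeOn n c E F) (i j k : ℕ) (hk : 1 ≤ k) (hi : i ≤ n) (hc : i = j + k + c) :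
    carryD E i j k = carryD F i j k ∧ E i (j + 1) (k - 1) = F i (j + 1) (k - 1) := by
  have hL : carryL E i (j + 1) k = carryL F i (j + 1) k := by
    obtain ⟨h1, h2⟩ := h i (j + 1) k (by omega) hk hi (by omega)
    rw [carryL, carryL, h1, h2]
  have hD : carryD E i j k = carryD F i j k := by
    rcases Nat.eq_zero_or_pos j with rfl | hj
    · rw [carryD_zero, carryD_zero]
    · obtain ⟨i, rfl⟩ : ∃ m, i = m + 1 := ⟨i - 1, by omega⟩
      obtain ⟨h1, h2⟩ := h i j k hj hk (by omega) (by omega)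
      have e1 := hE i j k hj hk (by omega) hi
      have e2 := hF i j k hj hk (by omega) hi
      rw [hL, carryL, h1, h2] at e1
      rw [carryL] at e2
      linarith
  have e1 := carryL_succ E i j k
  have e2 := carryL_succ F i j k
  exact ⟨hD, by linarith⟩

/-- Agreement on the boundary diagonal `j + k = i + 1` propagates to every diagonal. -/
lemma agreeOn_all {n : ℕ} {E F : ℕ → ℕ → ℕ → ℤ} (hE : SymmRec n E) (hF : SymmRec n F)
    (h : AgreeOn n 0 E F) (c : ℕ) : AgreeOn n c E F := by
  induction c with
  | zero => exact h
  | succ c ih =>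
    intro i j k hj hk hi hc
    obtain ⟨j, rfl⟩ : ∃ m, j = m + 1 := ⟨j - 1, by omega⟩
    -- `E` on the new diagonal sits one layer below the layer differences
    have h1 := (diagonal_step hE hF ih i j (k + 1) (by omega) hi (by omega)).2
    have h2 := (diagonal_step hE hF ih i (j + 1) k hk hi (by omega)).1
    exact ⟨by simpa using h1, h2⟩

/-- On the boundary diagonal, equal values of `L` and of `E i j k - E i j (k-1)` (that is, equal
`ℓ'` and `ρ'`) force agreement of `E` and of the layer differences. -/
lemma boundary_eq {n : ℕ} {E F : ℕ → ℕ → ℕ → ℤ} (hE : SymmRec n E) (hF : SymmRec n F)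
    (hEn : ∀ j k : ℕ, 1 ≤ j → 1 ≤ k → j + k ≤ n + 1 → E n j k = 0)
    (hFn : ∀ j k : ℕ, 1 ≤ j → 1 ≤ k → j + k ≤ n + 1 → F n j k = 0)
    (hl : ∀ i j k : ℕ, 1 ≤ k → i = j + k → i ≤ n →
      carryL E i (j + 1) k = carryL F i (j + 1) k)
    (hr : ∀ i j k : ℕ, 1 ≤ k → i = j + k → i ≤ n →
      -E i (j + 1) (k - 1) + E i (j + 1) k = -F i (j + 1) (k - 1) + F i (j + 1) k) :
    AgreeOn n 0 E F := by
  have key : ∀ m i j k : ℕ, 1 ≤ k → i = j + k → i + m = n →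
      E i (j + 1) k = F i (j + 1) k := by
    intro m
    induction m with
    | zero =>
      intro i j k hk hi hm
      obtain rfl : i = n := by omega
      rw [hEn _ _ (by omega) hk (by omega), hFn _ _ (by omega) hk (by omega)]
    | succ m ih =>
      intro i j k hk hi hm
      have h0 := ih (i + 1) (j + 1) k hk (by omega) (by omega)
      have h1 := hr (i + 1) (j + 1) k hk (by omega) (by omega)
      have h2 := hl (i + 1) (j + 1) k hk (by omega) (by omega)
      have h3 := hl i j k hk hi (by omega)
      have e1 := hE i (j + 1) k (by omega) hk (by omega) (by omega)
      have e2 := hF i (j + 1) k (by omega) hk (by omega) (by omega)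
      rw [h2, h3] at e1
      rw [carryL_succ, carryL_succ] at h2
      linarith
  intro i j k hj hk hi hc
  obtain ⟨j, rfl⟩ : ∃ m, j = m + 1 := ⟨j - 1, by omega⟩
  have h1 := key (n - i) i j k hk (by omega) (by omega)
  have h2 := hl i j k hk (by omega) hi
  rw [carryL, carryL] at h2
  exact ⟨h1, by linarith⟩

/-- The data `ℓ'` is the boundary value of `L`. -/
lemma carryL_boundary (E : ℕ → ℕ → ℕ → ℤ) (i j k : ℕ) :
    carryL E i (j + 1) k = ∑ t ∈ Finset.Icc 1 (j + 1), E i t (k - 1)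
      - ∑ t ∈ Finset.Icc 1 j, E i t k := by
  rw [carryL_succ, carryD, Finset.sum_Icc_succ_top (by omega)]
  ring

/-- The map `y ↦ (l', r')` is injective on weakly decreasing families: if two
weakly decreasing families of non-negative integers produce, via the stated
recursion, identical row-length and rigging data, then the families agree. -/
theorem stmt_18 (n : ℕ) (hn : 1 ≤ n)
    (y : ℕ → ℕ → ℤ)
    (hy0 : ∀ i j : ℕ, 1 ≤ j → j ≤ i → i ≤ n → 0 ≤ y i j)
    (hymono : ∀ i j : ℕ, 1 ≤ j → j ≤ i → i + 1 ≤ n → y (i + 1) j ≤ y i j)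
    (E : ℕ → ℕ → ℕ → ℤ)
    (hE0 : ∀ i j : ℕ, 1 ≤ j → j ≤ i → i ≤ n → E i j 0 = y i j)
    (hEn : ∀ j k : ℕ, 1 ≤ j → 1 ≤ k → j + k ≤ n + 1 → E n j k = 0)
    (hErec : ∀ i j k : ℕ, 1 ≤ j → 1 ≤ k → j + k ≤ i + 1 → i + 1 ≤ n →
      E i j k = min (E (i + 1) (j + 1) (k - 1))
        (∑ t ∈ Finset.Icc 1 j, E i t (k - 1)
          - ∑ t ∈ Finset.Icc 1 j, E (i + 1) t (k - 1)
          - ∑ t ∈ Finset.Icc 1 (j - 1), E i t k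
          + ∑ t ∈ Finset.Icc 1 j, E (i + 1) t k))
    (l' r' : ℕ → ℕ → ℤ)
    (hl' : ∀ i k : ℕ, 1 ≤ k → k ≤ i → i ≤ n →
      l' i k = ∑ j ∈ Finset.Icc 1 (i + 1 - k), E i j (k - 1)
        - ∑ j ∈ Finset.Icc 1 (i - k), E i j k)
    (hr' : ∀ i k : ℕ, 1 ≤ k → k ≤ i → i ≤ n →
      r' i k = -E i (i + 1 - k) (k - 1) + E i (i + 1 - k) k)
    (y2 : ℕ → ℕ → ℤ)
    (hy02 : ∀ i j : ℕ, 1 ≤ j → j ≤ i → i ≤ n → 0 ≤ y2 i j)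
    (hymono2 : ∀ i j : ℕ, 1 ≤ j → j ≤ i → i + 1 ≤ n → y2 (i + 1) j ≤ y2 i j)
    (E2 : ℕ → ℕ → ℕ → ℤ)
    (hE02 : ∀ i j : ℕ, 1 ≤ j → j ≤ i → i ≤ n → E2 i j 0 = y2 i j)
    (hEn2 : ∀ j k : ℕ, 1 ≤ j → 1 ≤ k → j + k ≤ n + 1 → E2 n j k = 0)
    (hErec2 : ∀ i j k : ℕ, 1 ≤ j → 1 ≤ k → j + k ≤ i + 1 → i + 1 ≤ n →
      E2 i j k = min (E2 (i + 1) (j + 1) (k - 1))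
        (∑ t ∈ Finset.Icc 1 j, E2 i t (k - 1)
          - ∑ t ∈ Finset.Icc 1 j, E2 (i + 1) t (k - 1)
          - ∑ t ∈ Finset.Icc 1 (j - 1), E2 i t k
          + ∑ t ∈ Finset.Icc 1 j, E2 (i + 1) t k))
    (l2' r2' : ℕ → ℕ → ℤ)
    (hl2' : ∀ i k : ℕ, 1 ≤ k → k ≤ i → i ≤ n →
      l2' i k = ∑ j ∈ Finset.Icc 1 (i + 1 - k), E2 i j (k - 1)
        - ∑ j ∈ Finset.Icc 1 (i - k), E2 i j k)
    (hr2' : ∀ i k : ℕ, 1 ≤ k → k ≤ i → i ≤ n →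
      r2' i k = -E2 i (i + 1 - k) (k - 1) + E2 i (i + 1 - k) k)
    (heq : ∀ i k : ℕ, 1 ≤ k → k ≤ i → i ≤ n →
      l' i k = l2' i k ∧ r' i k = r2' i k) :
    ∀ i j : ℕ, 1 ≤ j → j ≤ i → i ≤ n → y i j = y2 i j := by
  have hE : SymmRec n E := fun i j k hj hk h1 h2 =>
    carryD_rec E i j k hj (hErec i j k hj hk h1 h2)
  have hF : SymmRec n E2 := fun i j k hj hk h1 h2 =>
    carryD_rec E2 i j k hj (hErec2 i j k hj hk h1 h2)
  have h0 : AgreeOn n 0 E E2 := by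
    refine boundary_eq hE hF hEn hEn2 ?_ ?_
    · intro i j k hk hi hin
      have h1 := hl' i k hk (by omega) hin
      have h2 := hl2' i k hk (by omega) hin
      have h3 := (heq i k hk (by omega) hin).1
      rw [show i + 1 - k = j + 1 by omega, show i - k = j by omega, ← carryL_boundary] at h1 h2
      linarith
    · intro i j k hk hi hin
      have h1 := hr' i k hk (by omega) hin
      have h2 := hr2' i k hk (by omega) hin
      have h3 := (heq i k hk (by omega) hin).2
      rw [show i + 1 - k = j + 1 by omega] at h1 h2
      linarith
  intro i j hj hji hin
  obtain ⟨j, rfl⟩ : ∃ m, j = m + 1 := ⟨j - 1, by omega⟩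
  have h := (diagonal_step hE hF (agreeOn_all hE hF h0 (i - (j + 1))) i j 1 le_rfl hin
    (by omega)).2
  rw [← hE0 i (j + 1) hj hji hin, ← hE02 i (j + 1) hj hji hin]
  simpa using h
end

section
/- For every 1 ≤ i ≤ n and every k with n − i + 1 < k ≤ i, one has ℓ'_{i,k} = 0; moreover for each 1 ≤ i ≤ n the sequence ℓ'_{i,1}, ℓ'_{i,2}, …, ℓ'_{i,i} is a genuine partition (each ℓ'_{i,k} is a non-negative integer and ℓ'_{i,k+1} ≤ ℓ'_{i,k}), so the i-th rigged partition of the rigged configuration rc_y determined by the data (ℓ'_{i,k}, ρ'_{i,k}) has height at most min{i, n − i + 1}. -/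
/-!
Write `D i j k = ∑_{t ≤ j} E i t k - ∑_{t ≤ j} E i t (k+1)` (`levelGap`). In terms of `D` the recursion that
defines the extension is a last-passage (Greene / RSK type) recursion
`D i (j+1) k = max (D (i+1) (j+1) k) (D i j k + E i (j+1) k - E (i+1) (j+2) k)`,
with `D i 0 k = 0`, and the row lengths are `l' i (k+1) = D i j k + E i (j+1) k` where `j + k + 1 = i`.

Each level `E · · k` is non-negative and weakly decreasing in `i`, by induction on `k`
(`Extension.nonneg_and_antitone`), so the row lengths are non-negative. Iterating
`E i j (k+1) ≤ E (i+1) (j+1) k` up to the boundary row `n` gives `E i j k = 0` for `n < i + k`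
(`Extension.eq_zero`), hence the vanishing. The row lengths decrease because of the interlacing
inequality `D i j (k+1) ≤ D (i+1) (j+1) k` (`Extension.interlace`), which follows from the max
recursion and `E i j (k+1) ≤ E (i+1) (j+1) k`.
-/

/-- The defining properties of the extension `E` of a non-negative family that is weakly decreasing
in its first index, with the level shifted (`k + 1` in place of `k ≥ 1`). -/
structure Extension (n : ℕ) (E : ℕ → ℕ → ℕ → ℤ) : Prop where
  nonneg_zero : ∀ i j, 1 ≤ j → j ≤ i → i ≤ n → 0 ≤ E i j 0
  antitone_zero : ∀ i j, 1 ≤ j → j ≤ i → i + 1 ≤ n → E (i + 1) j 0 ≤ E i j 0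
  boundary : ∀ j k, 1 ≤ j → j + k ≤ n → E n j (k + 1) = 0
  recursion : ∀ i j k, 1 ≤ j → j + k ≤ i → i + 1 ≤ n →
    E i j (k + 1) = min (E (i + 1) (j + 1) k)
      (∑ t ∈ Finset.Icc 1 j, E i t k
        - ∑ t ∈ Finset.Icc 1 j, E (i + 1) t k
        - ∑ t ∈ Finset.Icc 1 (j - 1), E i t (k + 1)
        + ∑ t ∈ Finset.Icc 1 j, E (i + 1) t (k + 1))

/-- The difference of the `j`-th partial row sums at the consecutive levels `k` and `k + 1`. -/
def levelGap (E : ℕ → ℕ → ℕ → ℤ) (i j k : ℕ) : ℤ :=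
  ∑ t ∈ Finset.Icc 1 j, E i t k - ∑ t ∈ Finset.Icc 1 j, E i t (k + 1)

theorem levelGap_zero (E : ℕ → ℕ → ℕ → ℤ) (i k : ℕ) : levelGap E i 0 k = 0 := by
  simp [levelGap]

theorem levelGap_succ (E : ℕ → ℕ → ℕ → ℤ) (i j k : ℕ) :
    levelGap E i (j + 1) k = levelGap E i j k + E i (j + 1) k - E i (j + 1) (k + 1) := by
  simp only [levelGap]
  rw [Finset.sum_Icc_succ_top (by omega), Finset.sum_Icc_succ_top (by omega)]
  ring

namespace Extension

variable {n : ℕ} {E : ℕ → ℕ → ℕ → ℤ}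

theorem apply_succ (h : Extension n E) {i j k : ℕ} (hij : j + 1 + k ≤ i) (hi : i + 1 ≤ n) :
    E i (j + 1) (k + 1) = min (E (i + 1) (j + 2) k)
      (E i (j + 1) k + levelGap E i j k - levelGap E (i + 1) (j + 1) k) := by
  rw [h.recursion i (j + 1) k (by omega) hij hi]
  congr 1
  simp only [levelGap, Nat.add_sub_cancel]
  rw [Finset.sum_Icc_succ_top (a := 1) (b := j) (by omega) (fun t => E i t k)]
  ring

/-- The last-passage recursion for the level gaps. -/
theorem levelGap_eq_max (h : Extension n E) {i j k : ℕ} (hij : j + 1 + k ≤ i) (hi : i + 1 ≤ n) :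
    levelGap E i (j + 1) k = max (levelGap E (i + 1) (j + 1) k)
      (levelGap E i j k + E i (j + 1) k - E (i + 1) (j + 2) k) := by
  have h1 := h.apply_succ hij hi
  have h2 := levelGap_succ E i j k
  omega

theorem apply_succ_le (h : Extension n E) {i j k : ℕ} (hj : 1 ≤ j) (hij : j + k ≤ i)
    (hi : i + 1 ≤ n) : E i j (k + 1) ≤ E (i + 1) (j + 1) k := by
  rw [h.recursion i j k hj hij hi]
  exact min_le_left _ _

theorem levelGap_antitone (h : Extension n E) {i j k : ℕ} (hij : j + k ≤ i) (hi : i + 1 ≤ n) :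
    levelGap E (i + 1) j k ≤ levelGap E i j k := by
  cases j with
  | zero => simp [levelGap_zero]
  | succ j =>
    rw [h.levelGap_eq_max (by omega) hi]
    exact le_max_left _ _

/-- Passing from `(i, j)` to `(i + 1, j + 1)` adds at most `E i (j + 1) k`; this is exactly the
non-negativity of the second argument of the minimum defining `E i (j + 1) (k + 1)`. -/
theorem levelGap_le_add (h : Extension n E) {k : ℕ}
    (h0 : ∀ i j, 1 ≤ j → j ≤ i → j + k ≤ i + 1 → i ≤ n → 0 ≤ E i j k)
    (hm : ∀ i j, 1 ≤ j → j ≤ i → j + k ≤ i + 1 → i + 1 ≤ n → E (i + 1) j k ≤ E i j k)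
    (d : ℕ) : ∀ i j, j + 1 + k ≤ i → i + 1 + d = n →
      levelGap E (i + 1) (j + 1) k ≤ levelGap E i j k + E i (j + 1) k := by
  induction d with
  | zero =>
    intro i j hij hi
    obtain rfl : i + 1 = n := by omega
    have h1 := levelGap_succ E (i + 1) j k
    have h2 := h.boundary (j + 1) k (by omega) (by omega)
    have h3 := h.levelGap_antitone (i := i) (j := j) (k := k) (by omega) (by omega)
    have h4 := hm i (j + 1) (by omega) (by omega) (by omega) (by omega)
    omega
  | succ d ih =>
    intro i j hij hi
    have h1 := h.levelGap_eq_max (i := i + 1) (j := j) (k := k) (by omega) (by omega)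
    have h2 := ih (i + 1) j (by omega) (by omega)
    have h3 := h.levelGap_antitone (i := i) (j := j) (k := k) (by omega) (by omega)
    have h4 := hm i (j + 1) (by omega) (by omega) (by omega) (by omega)
    have h5 := h0 (i + 1 + 1) (j + 2) (by omega) (by omega) (by omega) (by omega)
    omega

/-- The condition `j ≤ i` only matters at level `0`, where `j + k ≤ i + 1` would also allow the
index `j = i + 1`, at which `E` is unspecified. -/
theorem nonneg_and_antitone (h : Extension n E) (k : ℕ) :
    (∀ i j, 1 ≤ j → j ≤ i → j + k ≤ i + 1 → i ≤ n → 0 ≤ E i j k) ∧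
    (∀ i j, 1 ≤ j → j ≤ i → j + k ≤ i + 1 → i + 1 ≤ n → E (i + 1) j k ≤ E i j k) := by
  induction k with
  | zero =>
    exact ⟨fun i j hj hji _ hi => h.nonneg_zero i j hj hji hi,
      fun i j hj hji _ hi => h.antitone_zero i j hj hji hi⟩
  | succ k ih =>
    obtain ⟨h0, hm⟩ := ih
    have hpos : ∀ i j, 1 ≤ j → j ≤ i → j + (k + 1) ≤ i + 1 → i ≤ n → 0 ≤ E i j (k + 1) := by
      intro i j hj hji hij hi
      obtain ⟨j, rfl⟩ := Nat.exists_eq_add_of_le' hj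
      rcases Nat.eq_or_lt_of_le hi with rfl | hi
      · rw [h.boundary (j + 1) k hj (by omega)]
      · have h1 := h.apply_succ (i := i) (j := j) (k := k) (by omega) (by omega)
        have h2 := h0 (i + 1) (j + 2) (by omega) (by omega) (by omega) (by omega)
        have h3 := h.levelGap_le_add h0 hm (n - (i + 1)) i j (by omega) (by omega)
        omega
    refine ⟨hpos, ?_⟩
    intro i j hj hji hij hi
    obtain ⟨j, rfl⟩ := Nat.exists_eq_add_of_le' hj
    rcases Nat.eq_or_lt_of_le hi with rfl | hi'
    · rw [h.boundary (j + 1) k hj (by omega)]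
      exact hpos i (j + 1) hj (by omega) hij (by omega)
    · have h1 := h.apply_succ (i := i) (j := j) (k := k) (by omega) (by omega)
      have h2 := h.apply_succ_le (i := i + 1) (j := j + 1) (k := k) (by omega) (by omega) hi'
      have h3 := hm (i + 1) (j + 2) (by omega) (by omega) (by omega) (by omega)
      have h4 := levelGap_succ E (i + 1) j k
      have h5 := hm i (j + 1) (by omega) (by omega) (by omega) (by omega)
      have h6 := h.levelGap_antitone (i := i) (j := j) (k := k) (by omega) (by omega)
      rw [show j + 1 + 1 = j + 2 from rfl] at h2
      omega

theorem eq_zero (h : Extension n E) (k : ℕ) : ∀ i j, 1 ≤ j → j + k ≤ i + 1 → i ≤ n →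
    n < i + k → E i j k = 0 := by
  induction k with
  | zero => intros; omega
  | succ k ih =>
    intro i j hj hij hi hk
    rcases Nat.eq_or_lt_of_le hi with rfl | hi'
    · exact h.boundary j k hj (by omega)
    · have h1 := h.apply_succ_le (i := i) (j := j) (k := k) hj (by omega) hi'
      have h2 := ih (i + 1) (j + 1) (by omega) (by omega) (by omega) (by omega)
      have h3 := (h.nonneg_and_antitone (k + 1)).1 i j hj (by omega) hij hi
      omega

theorem levelGap_boundary_succ (h : Extension n E) {j k : ℕ} (hjk : j + k + 1 ≤ n) :
    levelGap E n j (k + 1) = 0 := by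
  induction j with
  | zero => exact levelGap_zero _ _ _
  | succ j ih =>
    rw [levelGap_succ, ih (by omega), h.boundary (j + 1) k (by omega) (by omega),
      h.boundary (j + 1) (k + 1) (by omega) (by omega)]
    rfl

theorem levelGap_nonneg (h : Extension n E) (k d : ℕ) : ∀ i j, j + k ≤ i → i + d = n →
    0 ≤ levelGap E i j k := by
  induction d with
  | zero =>
    intro i j hij hi
    obtain rfl : i = n := by omega
    induction j with
    | zero => exact (levelGap_zero _ _ _).ge
    | succ j ih =>
      have h1 := ih (by omega)
      have h2 := levelGap_succ E i j k
      have h3 := h.boundary (j + 1) k (by omega) (by omega)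
      have h4 := (h.nonneg_and_antitone k).1 i (j + 1) (by omega) (by omega) (by omega) le_rfl
      omega
  | succ d ih =>
    intro i j hij hi
    exact (ih (i + 1) j (by omega) (by omega)).trans (h.levelGap_antitone hij (by omega))

/-- Interlacing of the level gaps at consecutive levels. -/
theorem interlace (h : Extension n E) (k d : ℕ) : ∀ i j, j + k + 1 ≤ i → i + 1 + d = n →
    levelGap E i j (k + 1) ≤ levelGap E (i + 1) (j + 1) k := by
  induction d with
  | zero =>
    intro i j
    induction j with
    | zero =>
      intro hij hi
      rw [levelGap_zero]
      exact h.levelGap_nonneg k 0 _ _ (by omega) hi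
    | succ j ihj =>
      intro hij hi
      have h1 := h.levelGap_eq_max (i := i) (j := j) (k := k + 1) (by omega) (by omega)
      have h2 := ihj (by omega) hi
      have h3 := levelGap_succ E (i + 1) (j + 1) k
      have h4 := h.apply_succ_le (i := i) (j := j + 1) (k := k) (by omega) (by omega) (by omega)
      have h5 := h.levelGap_nonneg k 0 (i + 1) (j + 2) (by omega) hi
      obtain rfl : i + 1 = n := by omega
      have h6 := h.levelGap_boundary_succ (j := j + 1) (k := k) (by omega)
      rw [show j + 1 + 1 = j + 2 from rfl] at *
      omega
  | succ d ihd =>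
    intro i j
    induction j with
    | zero =>
      intro hij hi
      rw [levelGap_zero]
      exact h.levelGap_nonneg k (d + 1) _ _ (by omega) hi
    | succ j ihj =>
      intro hij hi
      have h1 := h.levelGap_eq_max (i := i) (j := j) (k := k + 1) (by omega) (by omega)
      have h2 := ihj (by omega) hi
      have h3 := levelGap_succ E (i + 1) (j + 1) k
      have h4 := h.apply_succ_le (i := i) (j := j + 1) (k := k) (by omega) (by omega) (by omega)
      have h5 := ihd (i + 1) (j + 1) (by omega) (by omega)
      have h6 := h.levelGap_antitone (i := i + 1) (j := j + 2) (k := k) (by omega) (by omega)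
      rw [show j + 1 + 1 = j + 2 from rfl] at *
      omega

/-- The row lengths decrease: `l' i (k + 2) ≤ l' i (k + 1)` for `i = j + k + 2`, both sides being
written through level gaps. -/
theorem rowLength_antitone (h : Extension n E) {i j k : ℕ} (hij : i = j + k + 2) (hi : i ≤ n) :
    levelGap E i j (k + 1) + E i (j + 1) (k + 1)
      ≤ levelGap E i (j + 1) k + E i (j + 2) k := by
  have h0 := (h.nonneg_and_antitone k).1 i (j + 2) (by omega) (by omega) (by omega) hi
  rcases Nat.eq_or_lt_of_le hi with rfl | hi'
  · have h1 := h.levelGap_boundary_succ (j := j) (k := k) (by omega)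
    have h2 := h.boundary (j + 1) k (by omega) (by omega)
    have h3 := h.levelGap_nonneg k 0 i (j + 1) (by omega) rfl
    omega
  · have h1 := h.interlace k (n - (i + 1)) i j (by omega) (by omega)
    have h2 := h.levelGap_antitone (i := i) (j := j + 1) (k := k) (by omega) hi'
    have h3 := h.apply_succ_le (i := i) (j := j + 1) (k := k) (by omega) (by omega) hi'
    have h4 := (h.nonneg_and_antitone k).2 i (j + 2) (by omega) (by omega) (by omega) hi'
    rw [show j + 1 + 1 = j + 2 from rfl] at *
    omega

end Extension


/-- For every `1 ≤ i ≤ n`: the row lengths `l' i k` vanish for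
`n - i + 1 < k ≤ i`, and the sequence `l' i 1, …, l' i i` is a genuine
partition (non-negative and weakly decreasing in `k`); hence the `i`-th
rigged partition determined by `(l', r')` has height at most
`min i (n - i + 1)`. -/
theorem stmt_19 (n : ℕ) (hn : 1 ≤ n)
    (y : ℕ → ℕ → ℤ)
    (hy0 : ∀ i j : ℕ, 1 ≤ j → j ≤ i → i ≤ n → 0 ≤ y i j)
    (hymono : ∀ i j : ℕ, 1 ≤ j → j ≤ i → i + 1 ≤ n → y (i + 1) j ≤ y i j)
    (E : ℕ → ℕ → ℕ → ℤ)
    (hE0 : ∀ i j : ℕ, 1 ≤ j → j ≤ i → i ≤ n → E i j 0 = y i j)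
    (hEn : ∀ j k : ℕ, 1 ≤ j → 1 ≤ k → j + k ≤ n + 1 → E n j k = 0)
    (hErec : ∀ i j k : ℕ, 1 ≤ j → 1 ≤ k → j + k ≤ i + 1 → i + 1 ≤ n →
      E i j k = min (E (i + 1) (j + 1) (k - 1))
        (∑ t ∈ Finset.Icc 1 j, E i t (k - 1)
          - ∑ t ∈ Finset.Icc 1 j, E (i + 1) t (k - 1)
          - ∑ t ∈ Finset.Icc 1 (j - 1), E i t k
          + ∑ t ∈ Finset.Icc 1 j, E (i + 1) t k))
    (l' r' : ℕ → ℕ → ℤ)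
    (hl' : ∀ i k : ℕ, 1 ≤ k → k ≤ i → i ≤ n →
      l' i k = ∑ j ∈ Finset.Icc 1 (i + 1 - k), E i j (k - 1)
        - ∑ j ∈ Finset.Icc 1 (i - k), E i j k)
    (hr' : ∀ i k : ℕ, 1 ≤ k → k ≤ i → i ≤ n →
      r' i k = -E i (i + 1 - k) (k - 1) + E i (i + 1 - k) k) :
    ∀ i : ℕ, 1 ≤ i → i ≤ n →
      (∀ k : ℕ, n + 1 - i < k → k ≤ i → l' i k = 0) ∧
      (∀ k : ℕ, 1 ≤ k → k ≤ i → 0 ≤ l' i k) ∧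
      (∀ k : ℕ, 1 ≤ k → k + 1 ≤ i → l' i (k + 1) ≤ l' i k) := by
  have h : Extension n E :=
    { nonneg_zero := fun i j hj hji hi => hE0 i j hj hji hi ▸ hy0 i j hj hji hi
      antitone_zero := fun i j hj hji hi => by
        rw [hE0 i j hj hji (by omega), hE0 (i + 1) j hj (by omega) hi]
        exact hymono i j hj hji hi
      boundary := fun j k hj hjk => hEn j (k + 1) hj (by omega) (by omega)
      recursion := fun i j k hj hij hi => hErec i j (k + 1) hj (by omega) (by omega) hi }
  have hrow : ∀ i j k, i = j + k + 1 → i ≤ n →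
      l' i (k + 1) = levelGap E i j k + E i (j + 1) k := by
    intro i j k hij hi
    rw [hl' i (k + 1) (by omega) (by omega) hi, show i + 1 - (k + 1) = j + 1 by omega,
      show i - (k + 1) = j by omega, Finset.sum_Icc_succ_top (by omega), levelGap]
    simp only [Nat.add_sub_cancel]
    ring
  intro i hi1 hi
  refine ⟨fun k hk hki => ?_, fun k hk hki => ?_, fun k hk hki => ?_⟩
  · rw [hl' i k (by omega) hki hi, Finset.sum_eq_zero, Finset.sum_eq_zero, sub_zero]
    · intro j hj
      rw [Finset.mem_Icc] at hj
      exact h.eq_zero k i j hj.1 (by omega) hi (by omega)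
    · intro j hj
      rw [Finset.mem_Icc] at hj
      exact h.eq_zero (k - 1) i j hj.1 (by omega) hi (by omega)
  · obtain ⟨k, rfl⟩ := Nat.exists_eq_add_of_le' hk
    rw [hrow i (i - (k + 1)) k (by omega) hi]
    exact add_nonneg (h.levelGap_nonneg k (n - i) i _ (by omega) (by omega))
      ((h.nonneg_and_antitone k).1 i _ (by omega) (by omega) (by omega) hi)
  · obtain ⟨k, rfl⟩ := Nat.exists_eq_add_of_le' hk
    obtain ⟨j, hj⟩ := Nat.exists_eq_add_of_le' hki
    rw [hrow i j (k + 1) (by omega) hi, hrow i (j + 1) k (by omega) hi]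
    exact h.rowLength_antitone (by omega) hi
end
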